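/- arXiv:2301.11192 — 4 statements merged into one kernel-verified Lean document; each statement's English description precedes it below -/
import Mathlib

section
/- Let p ≥ 5 be a prime with p ≠ 11. If b₂₁((11p^2 − 5)/6) is even, then for every integer k ≥ 0, b₂₁((11p^{6k} − 5)/6) is odd. -/
/-- `b21 n` is the number of 21-regular partitions of `n`,
i.e. partitions of `n` none of whose parts is divisible by 21. -/
def b21 (n : ℕ) : ℕ :=
  (Finset.univ.filter fun c : n.Partition => ∀ i ∈ c.parts, ¬ (21 ∣ i)).card

/-!
Let `η(q)` be the reduction of `∏ (1 - q ^ n)` modulo 2; then `∑ b₂₁(n) q ^ n = η(q ^ 21) / η(q)`.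
Since `η(q) ^ 4 = η(q ^ 4)`, the product of this series with `η(q ^ 4)` is `η(q ^ 21) η(q) ^ 3`.
Restricting to the exponents `4 * n + 1` and counting elements of given norm in `ℤ[√-2]` and
`ℤ[√-7]` modulo 2 shows that `∑ b₂₁(4 * n + 1) q ^ n` is `η(q ^ 3)` times the sum of the
`q ^ ((x ^ 2 - 1) / 3)` over the positive `x` prime to 3. Hence `4 * b₂₁(4 * n + 1)` is congruent
modulo 8 to the number `N(48 * n + 22)` of elements of `ℤ[√-6]` of that norm with imaginary part
prime to 3.

Let `p ≥ 5` be a prime not dividing `m`. If `p` divides the norm of an element of `ℤ[√-6]` not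
divisible by `p`, there is such an element `w` of norm `p ^ 2`, and
`N(p ^ (2 * j + 2) * m) - N(p ^ (2 * j) * m)` is twice the number of `y` of norm `m` such that
`w ^ (j + 1) * y` has imaginary part prime to 3; otherwise this difference is 0. The imaginary part
of `w ^ 3` is divisible by 3 and its real part is not, so the number of these `y` depends only on
`j` modulo 3. It is the same even number for `w` and for `w ^ 2`, and it is `N(m)` for `w ^ 3`; as
4 divides `N(m)` when 3 does not divide `m`, three consecutive differences add up to a multiple
of 8. Thus `N(n ^ 6 * 22)` is congruent to `N(22) = 4` modulo 8 whenever `n` is coprime to 66.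
-/

section Counting

variable {d : ℤ}

theorem finite_setOf_norm_eq (hd : d < 0) (n : ℤ) : {z : ℤ√d | z.norm = n}.Finite := by
  have hinj : Function.Injective fun z : ℤ√d => (z.re, z.im) := fun z w h =>
    Zsqrtd.ext (congrArg Prod.fst h) (congrArg Prod.snd h)
  refine (((Set.finite_Icc (-n) n).prod (Set.finite_Icc (-n) n)).preimage hinj.injOn).subset ?_
  rintro z rfl
  simp only [Set.mem_preimage, Set.mem_prod, Set.mem_Icc, ← abs_le, Zsqrtd.norm_def]
  have abs_le_mul_self (a : ℤ) : |a| ≤ a * a := by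
    simpa only [sq, abs_mul_abs_self] using Int.le_self_sq |a|
  constructor
  · nlinarith [abs_le_mul_self z.re, mul_self_nonneg z.im]
  · nlinarith [abs_le_mul_self z.im, mul_self_nonneg z.re, mul_self_nonneg z.im]

theorem norm_eq_iff_natAbs {c n : ℕ} (hd : d = -c) {z : ℤ√d} :
    z.norm = n ↔ z.re.natAbs ^ 2 + c * z.im.natAbs ^ 2 = n := by
  subst hd
  zify
  rw [Zsqrtd.norm_def, sq_abs, sq_abs]
  ring_nf

theorem natAbs_intUnit_mul (u : ℤˣ) (n : ℕ) : ((u : ℤ) * n).natAbs = n := by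
  simp only [Int.natAbs_mul, Int.units_natAbs, one_mul, Int.natAbs_natCast]

theorem exists_eq_intUnit_mul_natAbs (a : ℤ) : ∃ u : ℤˣ, a = u * a.natAbs := by
  rcases Int.natAbs_eq a with h | h
  · exact ⟨1, by simpa using h⟩
  · exact ⟨-1, by simpa using h⟩

theorem intUnit_mul_natCast_inj {u v : ℤˣ} {m n : ℕ} (hm : m ≠ 0)
    (h : (u : ℤ) * m = v * n) : u = v ∧ m = n := by
  obtain rfl : m = n := by
    simpa only [natAbs_intUnit_mul] using congrArg Int.natAbs h
  exact ⟨Units.ext (mul_right_cancel₀ (Nat.cast_ne_zero.mpr hm) h), rfl⟩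

theorem ncard_setOf_natAbs {P : ℕ → ℕ → Prop} (hP : ∀ x y, P x y → x ≠ 0 ∧ y ≠ 0) :
    {z : ℤ√d | P z.re.natAbs z.im.natAbs}.ncard = 4 * {a : ℕ × ℕ | P a.1 a.2}.ncard := by
  let f : (ℤˣ × ℤˣ) × ℕ × ℕ → ℤ√d := fun q => ⟨q.1.1 * q.2.1, q.1.2 * q.2.2⟩
  have hf : Set.InjOn f (Set.univ ×ˢ {a : ℕ × ℕ | P a.1 a.2}) := by
    rintro ⟨⟨u, v⟩, x, y⟩ ⟨-, hxy⟩ ⟨⟨u', v'⟩, x', y'⟩ - h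
    obtain ⟨hx, hy⟩ := hP x y hxy
    obtain ⟨rfl, rfl⟩ := intUnit_mul_natCast_inj hx (congrArg Zsqrtd.re h)
    obtain ⟨rfl, rfl⟩ := intUnit_mul_natCast_inj hy (congrArg Zsqrtd.im h)
    rfl
  have himage : f '' (Set.univ ×ˢ {a : ℕ × ℕ | P a.1 a.2}) =
      {z : ℤ√d | P z.re.natAbs z.im.natAbs} := by
    ext z
    constructor
    · rintro ⟨⟨⟨u, v⟩, x, y⟩, ⟨-, hxy⟩, rfl⟩
      simpa only [f, Set.mem_ofPred_eq, natAbs_intUnit_mul] using hxy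
    · intro hz
      obtain ⟨u, hu⟩ := exists_eq_intUnit_mul_natAbs z.re
      obtain ⟨v, hv⟩ := exists_eq_intUnit_mul_natAbs z.im
      exact ⟨((u, v), z.re.natAbs, z.im.natAbs), ⟨Set.mem_univ _, hz⟩, Zsqrtd.ext hu.symm hv.symm⟩
  rw [← himage, hf.ncard_image, Set.ncard_prod, Set.ncard_univ, Nat.card_prod,
    Nat.card_eq_fintype_card, Fintype.card_units_int]

theorem ncard_setOf_natAbs_im_eq_zero {P : ℕ → Prop} (hP : ¬ P 0) :
    {z : ℤ√d | P z.re.natAbs ∧ z.im = 0}.ncard = 2 * {x : ℕ | P x}.ncard := by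
  let f : ℤˣ × ℕ → ℤ√d := fun q => ⟨q.1 * q.2, 0⟩
  have hf : Set.InjOn f (Set.univ ×ˢ {x : ℕ | P x}) := by
    rintro ⟨u, x⟩ ⟨-, hx⟩ ⟨u', x'⟩ - h
    have hx0 : x ≠ 0 := by rintro rfl; exact hP hx
    obtain ⟨rfl, rfl⟩ := intUnit_mul_natCast_inj hx0 (congrArg Zsqrtd.re h)
    rfl
  have himage : f '' (Set.univ ×ˢ {x : ℕ | P x}) =
      {z : ℤ√d | P z.re.natAbs ∧ z.im = 0} := by
    ext z
    constructor
    · rintro ⟨⟨u, x⟩, ⟨-, hx⟩, rfl⟩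
      simpa only [f, Set.mem_ofPred_eq, natAbs_intUnit_mul, and_true] using hx
    · rintro ⟨hz, him⟩
      obtain ⟨u, hu⟩ := exists_eq_intUnit_mul_natAbs z.re
      exact ⟨(u, z.re.natAbs), ⟨Set.mem_univ _, hz⟩, Zsqrtd.ext hu.symm him.symm⟩
  rw [← himage, hf.ncard_image, Set.ncard_prod, Set.ncard_univ,
    Nat.card_eq_fintype_card, Fintype.card_units_int]

theorem ncard_setOf_natAbs_of_re_ne_zero {P : ℕ → ℕ → Prop} (hP : ∀ x y, P x y → x ≠ 0)
    (hfin : {z : ℤ√d | P z.re.natAbs z.im.natAbs}.Finite) :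
    {z : ℤ√d | P z.re.natAbs z.im.natAbs}.ncard =
      4 * {a : ℕ × ℕ | P a.1 a.2 ∧ a.2 ≠ 0}.ncard + 2 * {x : ℕ | P x 0}.ncard := by
  rw [← Set.ncard_inter_add_ncard_sdiff_eq_ncard _ {z : ℤ√d | z.im = 0} hfin, add_comm,
    ← ncard_setOf_natAbs (d := d) (P := fun x y => P x y ∧ y ≠ 0) fun x y h => ⟨hP x y h.1, h.2⟩,
    ← ncard_setOf_natAbs_im_eq_zero (d := d) (P := fun x => P x 0) fun h => hP 0 0 h rfl]
  congr 2
  · ext z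
    simp only [Set.mem_sdiff, Set.mem_ofPred_eq, ne_eq, Int.natAbs_eq_zero]
  · ext z
    simp only [Set.mem_inter_iff, Set.mem_ofPred_eq]
    exact and_congr_left fun h => by rw [h, Int.natAbs_zero]

end Counting

section Divisibility

variable {d q : ℤ}

theorem mul_left_cancel_of_norm_ne_zero {w y z : ℤ√d} (hw : w.norm ≠ 0) (h : w * y = w * z) :
    y = z := by
  refine Zsqrtd.eq_of_smul_eq_smul_left (a := w.norm) hw ?_
  rw [Zsqrtd.norm_eq_mul_conj, mul_comm w, mul_assoc, mul_assoc, h]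

theorem intCast_dvd_iff_dvd_re (hq : Prime q) (hqd : ¬ q ∣ d) {z : ℤ√d} (hz : q ∣ z.norm) :
    (q : ℤ√d) ∣ z ↔ q ∣ z.re := by
  refine (Zsqrtd.intCast_dvd q z).trans (and_iff_left_of_imp fun hre => ?_)
  have him : q ∣ d * z.im ^ 2 := by
    have h := dvd_sub (hre.mul_right z.re) hz
    rwa [Zsqrtd.norm_def, sub_sub_cancel, mul_assoc, ← sq] at h
  exact hq.dvd_of_dvd_pow ((hq.dvd_or_dvd him).resolve_left hqd)

theorem intCast_dvd_of_dvd_intCast_mul (hq : Prime q) {a : ℤ} (ha : ¬ q ∣ a) {z : ℤ√d}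
    (h : (q : ℤ√d) ∣ a * z) : (q : ℤ√d) ∣ z := by
  rw [Zsqrtd.intCast_dvd, Zsqrtd.re_smul, Zsqrtd.im_smul] at h
  exact (Zsqrtd.intCast_dvd q z).mpr
    ⟨(hq.dvd_or_dvd h.1).resolve_left ha, (hq.dvd_or_dvd h.2).resolve_left ha⟩

theorem not_intCast_dvd_mul (hq : Prime q) {z w : ℤ√d} (hz : ¬ q ∣ z.norm)
    (hw : ¬ (q : ℤ√d) ∣ w) : ¬ (q : ℤ√d) ∣ z * w := fun h =>
  hw <| intCast_dvd_of_dvd_intCast_mul hq hz <| by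
    rw [Zsqrtd.norm_eq_mul_conj, mul_right_comm]
    exact h.mul_right (star z)

theorem sq_eq_re_mul_sub_norm (z : ℤ√d) : z ^ 2 = (2 * z.re : ℤ) * z - z.norm := by
  ext <;> simp only [sq, Zsqrtd.norm_def, Zsqrtd.re_sub, Zsqrtd.im_sub, Zsqrtd.re_mul,
    Zsqrtd.im_mul, Zsqrtd.re_intCast, Zsqrtd.im_intCast] <;> ring

theorem not_intCast_dvd_pow (hq : Prime q) (hq2 : ¬ q ∣ 2) (hqd : ¬ q ∣ d) {z : ℤ√d}
    (hz : q ∣ z.norm) (hqz : ¬ (q : ℤ√d) ∣ z) (n : ℕ) : ¬ (q : ℤ√d) ∣ z ^ (n + 1) := by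
  have htrace : ¬ q ∣ 2 * z.re :=
    hq.not_dvd_mul hq2 (mt (intCast_dvd_iff_dvd_re hq hqd hz).mpr hqz)
  induction n with
  | zero => rwa [pow_one]
  | succ n ih =>
    refine fun h => ih (intCast_dvd_of_dvd_intCast_mul hq htrace ?_)
    have hsum : ((2 * z.re : ℤ) : ℤ√d) * z ^ (n + 1) = z ^ (n + 2) + z.norm * z ^ n := by
      rw [pow_add z n 2, sq_eq_re_mul_sub_norm]
      ring
    rw [hsum]
    exact dvd_add h (((Zsqrtd.intCast_dvd_intCast q z.norm).mpr hz).mul_right _)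

theorem star_dvd_of_pow_dvd_re (hq : Prime q) (hqd : ¬ q ∣ d) {e : ℕ} {z w : ℤ√d}
    (hw : w.norm = q ^ e) (hz : q ^ e ∣ z.norm) (hre : q ^ e ∣ (z * w).re) : star w ∣ z := by
  have hnorm : (q ^ e) ^ 2 ∣ (z * w).norm := by
    rw [Zsqrtd.norm_mul, hw, sq]
    exact mul_dvd_mul_right hz _
  have him : q ^ e ∣ (z * w).im := by
    have h := dvd_sub (pow_dvd_pow_of_dvd hre 2) hnorm
    rw [Zsqrtd.norm_def, ← sq, sub_sub_cancel, mul_assoc, ← sq, ← pow_mul] at h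
    rw [← Int.pow_dvd_pow_iff two_ne_zero, ← pow_mul]
    exact hq.pow_dvd_of_dvd_mul_left _ hqd h
  obtain ⟨y, hy⟩ := (Zsqrtd.intCast_dvd (q ^ e) (z * w)).mpr ⟨hre, him⟩
  refine ⟨y, mul_left_cancel_of_norm_ne_zero (w := w) (hw ▸ pow_ne_zero e hq.ne_zero) ?_⟩
  rw [mul_comm w, hy, ← hw, Zsqrtd.norm_eq_mul_conj, mul_assoc]

theorem dvd_mul_re_of_star_dvd {e : ℕ} (he : e ≠ 0) {z w : ℤ√d}
    (hw : w.norm = q ^ e) (h : star w ∣ z) : q ∣ (z * w).re := by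
  obtain ⟨y, rfl⟩ := h
  rw [mul_right_comm, mul_comm (star w), ← Zsqrtd.norm_eq_mul_conj, hw, Zsqrtd.re_smul]
  exact (dvd_pow_self q he).mul_right _

theorem xor_dvd_star_dvd (hq : Prime q) (hq2 : ¬ q ∣ 2) (hqd : ¬ q ∣ d) {e : ℕ} (he : e ≠ 0)
    {z w : ℤ√d} (hw : w.norm = q ^ e) (hqw : ¬ (q : ℤ√d) ∣ w) (hz : q ^ e ∣ z.norm)
    (hqz : ¬ (q : ℤ√d) ∣ z) : Xor (w ∣ z) (star w ∣ z) := by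
  have hw' : (star w).norm = q ^ e := by rw [Zsqrtd.norm_conj, hw]
  have hsum : ¬ q ∣ (z * w).re + (z * star w).re := by
    have h : (z * w).re + (z * star w).re = 2 * (z.re * w.re) := by
      simp only [Zsqrtd.re_mul, Zsqrtd.re_star, Zsqrtd.im_star]
      ring
    rw [h]
    refine hq.not_dvd_mul hq2 (hq.not_dvd_mul ?_ ?_)
    · exact mt (intCast_dvd_iff_dvd_re hq hqd ((dvd_pow_self q he).trans hz)).mpr hqz
    · exact mt (intCast_dvd_iff_dvd_re hq hqd (hw ▸ dvd_pow_self q he)).mpr hqw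
  have hprod : q ^ e ∣ (z * w).re * (z * star w).re := by
    have h : (z * w).re * (z * star w).re =
        z.norm * (w.norm + d * w.im ^ 2) + w.norm * (d * z.im ^ 2) := by
      simp only [Zsqrtd.re_mul, Zsqrtd.re_star, Zsqrtd.im_star, Zsqrtd.norm_def]
      ring
    rw [h, hw]
    exact dvd_add (hz.mul_right _) (dvd_mul_right _ _)
  by_cases h : q ∣ (z * w).re
  · have h' : ¬ q ∣ (z * star w).re := mt (dvd_add h) hsum
    refine Or.inr ⟨star_dvd_of_pow_dvd_re hq hqd hw hz (hq.pow_dvd_of_dvd_mul_right e h' hprod), ?_⟩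
    exact fun hdvd => h' (dvd_mul_re_of_star_dvd he hw' (by rwa [star_star]))
  · refine Or.inl ⟨?_, fun hdvd => h (dvd_mul_re_of_star_dvd he hw hdvd)⟩
    have := star_dvd_of_pow_dvd_re hq hqd hw' hz (hq.pow_dvd_of_dvd_mul_left e h hprod)
    rwa [star_star] at this

theorem star_dvd_iff {w z : ℤ√d} : star w ∣ z ↔ w ∣ star z := by
  simpa only [starRingAut_apply, star_star] using
    map_dvd_iff (starRingAut (R := ℤ√d)) (a := w) (b := star z)

/- `w ∣ z` and `star w ∣ z` cut `S` into two halves exchanged by conjugation. -/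
theorem ncard_eq_two_mul_of_xor_dvd {S : Set (ℤ√d)} (hS : S.Finite)
    (hstar : ∀ z ∈ S, star z ∈ S) {w : ℤ√d} (hw : w.norm ≠ 0)
    (hxor : ∀ z ∈ S, Xor (w ∣ z) (star w ∣ z)) :
    S.ncard = 2 * {y | w * y ∈ S}.ncard := by
  have hdvd : (w * ·) '' {y | w * y ∈ S} = S ∩ {z | w ∣ z} := by
    ext z
    constructor
    · rintro ⟨y, hy, rfl⟩
      exact ⟨hy, dvd_mul_right w y⟩
    · rintro ⟨hz, y, rfl⟩
      exact ⟨y, hz, rfl⟩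
  have hndvd : star '' (S ∩ {z | w ∣ z}) = S \ {z | w ∣ z} := by
    ext z
    constructor
    · rintro ⟨y, ⟨hy, hwy⟩, rfl⟩
      exact ⟨hstar y hy, fun h => xor_iff_iff_not.mp (hxor y hy) |>.mp hwy (star_dvd_iff.mpr h)⟩
    · rintro ⟨hz, hwz⟩
      exact ⟨star z, ⟨hstar z hz, star_dvd_iff.mp ((hxor z hz).or.resolve_left hwz)⟩, star_star z⟩
  rw [← Set.ncard_inter_add_ncard_sdiff_eq_ncard S {z | w ∣ z} hS, ← hndvd,
    Set.ncard_image_of_injective _ star_injective, ← hdvd,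
    Set.ncard_image_of_injective _ fun y z h => mul_left_cancel_of_norm_ne_zero hw h, two_mul]

theorem ncard_primitive_eq_two_mul (hd : d < 0) (hq : Prime q) (hq2 : ¬ q ∣ 2) (hqd : ¬ q ∣ d)
    {e : ℕ} (he : e ≠ 0) {w : ℤ√d} (hw : w.norm = q ^ e) (hqw : ¬ (q : ℤ√d) ∣ w)
    {m : ℤ} (hm : ¬ q ∣ m) {C : ℤ√d → Prop} (hC : ∀ z, C z → C (star z)) :
    {z : ℤ√d | z.norm = q ^ e * m ∧ ¬ (q : ℤ√d) ∣ z ∧ C z}.ncard =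
      2 * {y : ℤ√d | y.norm = m ∧ C (w * y)}.ncard := by
  rw [ncard_eq_two_mul_of_xor_dvd ((finite_setOf_norm_eq hd _).subset fun z hz => hz.1) (w := w)]
  · congr 2
    ext y
    have hnorm : (w * y).norm = q ^ e * m ↔ y.norm = m := by
      rw [Zsqrtd.norm_mul, hw, mul_right_inj' (pow_ne_zero e hq.ne_zero)]
    simp only [Set.mem_ofPred_eq, hnorm]
    refine and_congr_right fun hy => and_iff_right ?_
    rw [mul_comm]
    exact not_intCast_dvd_mul hq (hy ▸ hm) hqw
  · rintro z ⟨hz, hqz, hCz⟩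
    refine ⟨by rw [Zsqrtd.norm_conj, hz], ?_, hC z hCz⟩
    rwa [← star_dvd_iff, star_intCast]
  · exact hw ▸ pow_ne_zero e hq.ne_zero
  · rintro z ⟨hz, hqz, -⟩
    exact xor_dvd_star_dvd hq hq2 hqd he hw hqw (hz ▸ dvd_mul_right _ _) hqz

end Divisibility

section Thue

theorem exists_abs_lt_dvd_add {n X Y : ℕ} [NeZero n] (h : n < X * Y) (a b : ℤ) :
    ∃ x y : ℤ, (x ≠ 0 ∨ y ≠ 0) ∧ |x| < X ∧ |y| < Y ∧ (n : ℤ) ∣ a * x + b * y := by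
  have hcard : Fintype.card (ZMod n) < Fintype.card (Fin X × Fin Y) := by
    simpa only [Fintype.card_prod, Fintype.card_fin, ZMod.card] using h
  obtain ⟨⟨x₁, y₁⟩, ⟨x₂, y₂⟩, hne, heq⟩ := Fintype.exists_ne_map_eq_of_card_lt
    (fun v : Fin X × Fin Y => ((a * (v.1 : ℕ) + b * (v.2 : ℕ) : ℤ) : ZMod n)) hcard
  refine ⟨(x₁ : ℕ) - (x₂ : ℕ), (y₁ : ℕ) - (y₂ : ℕ), ?_, abs_lt.mpr (by omega),
    abs_lt.mpr (by omega), ?_⟩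
  · rw [Ne, Prod.mk.injEq, Fin.ext_iff, Fin.ext_iff] at hne
    omega
  · convert (ZMod.intCast_eq_intCast_iff_dvd_sub _ _ _).mp heq.symm using 1
    ring

theorem sq_le_of_abs_lt_sqrt_add_one {x : ℤ} {n : ℕ} (h : |x| < (n.sqrt + 1 : ℕ)) :
    x ^ 2 ≤ n :=
  calc x ^ 2 = |x| ^ 2 := (sq_abs x).symm
    _ ≤ (n.sqrt : ℤ) ^ 2 := by gcongr; omega
    _ ≤ n := mod_cast Nat.sqrt_le' n

theorem lt_sqrt_two_mul_succ_mul_sqrt_half_succ {n : ℕ} (hn : Odd n) :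
    n < ((2 * n).sqrt + 1) * ((n / 2).sqrt + 1) := by
  have hX : 2 * n + 1 ≤ ((2 * n).sqrt + 1) ^ 2 := Nat.lt_succ_sqrt' (2 * n)
  have hY : n / 2 + 1 ≤ ((n / 2).sqrt + 1) ^ 2 := Nat.lt_succ_sqrt' (n / 2)
  have hhalf : 2 * (n / 2) + 1 = n := Nat.two_mul_div_two_add_one_of_odd hn
  refine lt_of_pow_lt_pow_left₀ 2 (Nat.zero_le _) ?_
  rw [mul_pow]
  exact lt_of_lt_of_le (by nlinarith) (Nat.mul_le_mul hX hY)

theorem exists_ne_zero_dvd_norm {p : ℕ} (hp : p.Prime) (hp2 : p ≠ 2) {z : ℤ√(-6)}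
    (hz : (p : ℤ) ∣ z.norm) (hpz : ¬ ((p : ℤ) : ℤ√(-6)) ∣ z) :
    ∃ w : ℤ√(-6), w ≠ 0 ∧ w.norm < 5 * p ∧ (p : ℤ) ∣ w.norm := by
  have hq : Prime (p : ℤ) := Nat.prime_iff_prime_int.mp hp
  have hodd : Odd p := hp.odd_of_ne_two hp2
  have _ : NeZero p := ⟨hp.ne_zero⟩
  have him : ¬ (p : ℤ) ∣ z.im := fun him => hpz <| by
    have hsq : z.re ^ 2 = z.norm + -6 * z.im * z.im := by
      rw [Zsqrtd.norm_def]
      ring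
    have hre : (p : ℤ) ∣ z.re ^ 2 := hsq ▸ dvd_add hz (him.mul_left _)
    exact (Zsqrtd.intCast_dvd _ _).mpr ⟨hq.dvd_of_dvd_pow hre, him⟩
  obtain ⟨x, y, hxy, hx, hy, hdvd⟩ :=
    exists_abs_lt_dvd_add (lt_sqrt_two_mul_succ_mul_sqrt_half_succ hodd) z.im (-z.re)
  have hnorm : (⟨x, y⟩ : ℤ√(-6)).norm = x ^ 2 + 6 * y ^ 2 := by
    rw [Zsqrtd.norm_def]
    ring
  refine ⟨⟨x, y⟩, ?_, ?_, ?_⟩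
  · rwa [Ne, Zsqrtd.ext_iff, not_and_or]
  · have hx2 := sq_le_of_abs_lt_sqrt_add_one hx
    have hy2 := sq_le_of_abs_lt_sqrt_add_one hy
    have hp2' := hp.two_le
    rw [Nat.odd_iff] at hodd
    omega
  · have hprod : z.im ^ 2 * (⟨x, y⟩ : ℤ√(-6)).norm =
        (z.im * x + -z.re * y) * (z.im * x + z.re * y) + z.norm * y ^ 2 := by
      rw [Zsqrtd.norm_def, Zsqrtd.norm_def]
      ring
    have hdvd' : (p : ℤ) ∣ z.im ^ 2 * (⟨x, y⟩ : ℤ√(-6)).norm :=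
      hprod ▸ dvd_add (hdvd.mul_right _) (hz.mul_right _)
    exact (hq.dvd_or_dvd hdvd').resolve_left (mt hq.dvd_of_dvd_pow him)

theorem intCast_dvd_sq_of_dvd_norm {m : ℤ} (hm0 : 0 < m) (hm : m < 5) {w : ℤ√(-6)}
    (h : m ∣ w.norm) : (m : ℤ√(-6)) ∣ w ^ 2 := by
  have hnorm : w.norm = w.re ^ 2 + 2 * (3 * w.im ^ 2) := by
    rw [Zsqrtd.norm_def]
    ring
  have htrace : m ∣ 2 * w.re := by
    interval_cases m
    · exact one_dvd _
    · exact dvd_mul_right 2 _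
    · have : 3 ∣ w.re ^ 2 := by omega
      exact (Int.prime_three.dvd_of_dvd_pow this).mul_left 2
    · have : 2 ∣ w.re ^ 2 := by omega
      exact mul_dvd_mul_left 2 (Int.prime_two.dvd_of_dvd_pow this)
  rw [sq_eq_re_mul_sub_norm]
  exact dvd_sub (((Zsqrtd.intCast_dvd_intCast _ _).mpr htrace).mul_right w)
    ((Zsqrtd.intCast_dvd_intCast _ _).mpr h)

theorem not_intCast_dvd_neg_six {p : ℕ} (hp : p.Prime) (hp5 : 5 ≤ p) : ¬ (p : ℤ) ∣ -6 := by
  rw [dvd_neg, show (6 : ℤ) = (6 : ℕ) from rfl, Int.natCast_dvd_natCast]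
  intro h
  rcases (hp.dvd_mul (m := 2) (n := 3)).mp h with h | h <;>
    exact absurd (Nat.le_of_dvd (by norm_num) h) (by omega)

theorem exists_norm_eq_sq_of_dvd_norm {p : ℕ} (hp : p.Prime) (hp5 : 5 ≤ p) {z : ℤ√(-6)}
    (hz : (p : ℤ) ∣ z.norm) (hpz : ¬ ((p : ℤ) : ℤ√(-6)) ∣ z) :
    ∃ w : ℤ√(-6), w.norm = p ^ 2 ∧ ¬ ((p : ℤ) : ℤ√(-6)) ∣ w := by
  obtain ⟨w, hw0, hw5, m, hm⟩ := exists_ne_zero_dvd_norm hp (by omega) hz hpz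
  have hpos : 0 < w.norm := (Zsqrtd.norm_nonneg (by norm_num) w).lt_of_ne'
    fun h => hw0 ((Zsqrtd.norm_eq_zero_iff (by norm_num) w).mp h)
  have hp0 : (0 : ℤ) < p := mod_cast hp.pos
  have hm0 : 0 < m := pos_of_mul_pos_right (hm ▸ hpos) hp0.le
  have hm5 : m < 5 := lt_of_mul_lt_mul_left (by linarith) hp0.le
  obtain ⟨y, hy⟩ := intCast_dvd_sq_of_dvd_norm hm0 hm5 (hm ▸ dvd_mul_left m p)
  have hq : Prime (p : ℤ) := Nat.prime_iff_prime_int.mp hp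
  have hq6 := not_intCast_dvd_neg_six hp hp5
  refine ⟨y, mul_left_cancel₀ (pow_ne_zero 2 hm0.ne') ?_, fun hpy => ?_⟩
  · calc m ^ 2 * y.norm = (w ^ 2).norm := by rw [hy, Zsqrtd.norm_mul, Zsqrtd.norm_intCast, sq]
      _ = w.norm ^ 2 := map_pow Zsqrtd.normMonoidHom w 2
      _ = m ^ 2 * p ^ 2 := by rw [hm, mul_pow, mul_comm]
  · have hpw : ¬ ((p : ℤ) : ℤ√(-6)) ∣ w := by
      rintro ⟨v, rfl⟩
      rw [Zsqrtd.norm_mul, Zsqrtd.norm_intCast, mul_assoc, mul_right_inj' hp0.ne'] at hm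
      have := Int.le_of_dvd hm0 (hm ▸ dvd_mul_right _ _)
      omega
    refine not_intCast_dvd_pow hq (fun h => hq6 (h.trans (by norm_num))) hq6
      (hm ▸ dvd_mul_right _ _) hpw 1 ?_
    exact hy ▸ hpy.mul_left _

end Thue

section ModThree

variable {d : ℤ}

theorem three_dvd_im_mul_iff {w : ℤ√d} (him : 3 ∣ w.im) (hre : ¬ 3 ∣ w.re) (y : ℤ√d) :
    3 ∣ (w * y).im ↔ 3 ∣ y.im := by
  rw [Zsqrtd.im_mul, dvd_add_left (him.mul_right _), Int.prime_three.dvd_mul, or_iff_right hre]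

theorem three_dvd_im_cube_mul_iff (hd : 3 ∣ d) {w : ℤ√d} (hw : ¬ 3 ∣ w.norm) (y : ℤ√d) :
    3 ∣ (w ^ 3 * y).im ↔ 3 ∣ y.im := by
  have him : (w ^ 3).im = 3 * (w.re ^ 2 * w.im) + d * w.im ^ 3 := by
    simp only [pow_succ, pow_zero, one_mul, Zsqrtd.re_mul, Zsqrtd.im_mul]
    ring
  refine three_dvd_im_mul_iff (him ▸ dvd_add (dvd_mul_right _ _) (hd.mul_right _)) (fun hre => ?_) y
  have hnorm : 3 ∣ (w ^ 3).norm :=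
    dvd_sub (hre.mul_right _) ((hd.mul_right _).mul_right _)
  have hpow : (w ^ 3).norm = w.norm ^ 3 := map_pow Zsqrtd.normMonoidHom w 3
  exact hw (Int.prime_three.dvd_of_dvd_pow (hpow ▸ hnorm))

/-- The number of elements `y` of norm `m` such that `w * y` has imaginary part prime to `3`. -/
noncomputable def twistedCount (w : ℤ√d) (m : ℤ) : ℕ :=
  {y : ℤ√d | y.norm = m ∧ ¬ 3 ∣ (w * y).im}.ncard

theorem twistedCount_cube_mul (hd : 3 ∣ d) {w : ℤ√d} (hw : ¬ 3 ∣ w.norm) (v : ℤ√d) (m : ℤ) :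
    twistedCount (w ^ 3 * v) m = twistedCount v m := by
  simp only [twistedCount, mul_assoc, three_dvd_im_cube_mul_iff hd hw]

theorem twistedCount_star (w : ℤ√d) (m : ℤ) : twistedCount (star w) m = twistedCount w m := by
  rw [twistedCount, twistedCount, ← Set.ncard_image_of_injective _ (star_injective (R := ℤ√d))]
  congr 1
  ext y
  rw [Set.mem_image_iff_of_inverse star_star star_star, Set.mem_ofPred_eq, Set.mem_ofPred_eq,
    Zsqrtd.norm_conj, ← star_mul', Zsqrtd.im_star, dvd_neg]

theorem twistedCount_sq (hd : 3 ∣ d) {w : ℤ√d} (hw : ¬ 3 ∣ w.norm) (m : ℤ) :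
    twistedCount (w ^ 2) m = twistedCount w m := by
  have h : w ^ 3 * star w ^ 2 = (w.norm ^ 2 : ℤ) * w := by
    push_cast
    rw [Zsqrtd.norm_eq_mul_conj]
    ring
  rw [← twistedCount_star, star_pow, ← twistedCount_cube_mul hd hw, h]
  simp only [twistedCount, mul_assoc, Zsqrtd.im_smul, Int.prime_three.dvd_mul,
    mt Int.prime_three.dvd_of_dvd_pow hw, false_or]

/-- The number of elements of norm `N` in `ℤ√(-6)` whose imaginary part is prime to `3`. -/
noncomputable def normCount (N : ℕ) : ℕ :=
  {z : ℤ√(-6) | z.norm = N ∧ ¬ 3 ∣ z.im}.ncard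

theorem normCount_eq_four_mul {N : ℕ} (hN : ¬ 3 ∣ N) :
    normCount N = 4 * {a : ℕ × ℕ | a.1 ^ 2 + 6 * a.2 ^ 2 = N ∧ ¬ 3 ∣ a.2}.ncard := by
  rw [← ncard_setOf_natAbs (d := -6) (P := fun x y => x ^ 2 + 6 * y ^ 2 = N ∧ ¬ 3 ∣ y), normCount]
  · simp only [norm_eq_iff_natAbs (c := 6) rfl, ← Int.natCast_dvd, Nat.cast_ofNat]
  · rintro x y ⟨h, hy⟩
    constructor <;> rintro rfl
    · exact hN (h ▸ by omega)
    · exact hy (dvd_zero 3)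

theorem normCount_prime_sq_mul {p : ℕ} (hp : p.Prime) (hp3 : p ≠ 3) (N : ℕ) :
    normCount (p ^ 2 * N) = normCount N +
      {z : ℤ√(-6) | z.norm = (p : ℤ) ^ 2 * N ∧ ¬ ((p : ℤ) : ℤ√(-6)) ∣ z ∧ ¬ 3 ∣ z.im}.ncard := by
  have hp0 : (p : ℤ) ≠ 0 := mod_cast hp.ne_zero
  have hp3' : ¬ (3 : ℤ) ∣ p := by
    exact_mod_cast (Nat.prime_dvd_prime_iff_eq Nat.prime_three hp).not.mpr hp3.symm
  have himage : (((p : ℤ) : ℤ√(-6)) * ·) '' {z | z.norm = N ∧ ¬ 3 ∣ z.im} =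
      {z | z.norm = (p : ℤ) ^ 2 * N ∧ ¬ 3 ∣ z.im} ∩ {z | ((p : ℤ) : ℤ√(-6)) ∣ z} := by
    have hmem (y : ℤ√(-6)) : ((p : ℤ) * y).norm = (p : ℤ) ^ 2 * N ∧ ¬ 3 ∣ ((p : ℤ) * y).im ↔
        y.norm = N ∧ ¬ 3 ∣ y.im := by
      rw [Zsqrtd.norm_mul, Zsqrtd.norm_intCast, Zsqrtd.im_smul, Int.prime_three.dvd_mul,
        or_iff_right hp3', ← sq, mul_right_inj' (pow_ne_zero 2 hp0)]
    ext z
    constructor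
    · rintro ⟨y, hy, rfl⟩
      exact ⟨(hmem y).mpr hy, dvd_mul_right _ _⟩
    · rintro ⟨hz, y, rfl⟩
      exact ⟨y, (hmem y).mp hz, rfl⟩
  have hfin : {z : ℤ√(-6) | z.norm = (p : ℤ) ^ 2 * N ∧ ¬ 3 ∣ z.im}.Finite :=
    (finite_setOf_norm_eq (by norm_num) _).subset fun z hz => hz.1
  rw [normCount, normCount, Nat.cast_mul, Nat.cast_pow,
    ← Set.ncard_inter_add_ncard_sdiff_eq_ncard _ _ hfin, ← himage,
    Set.ncard_image_of_injective _ fun y z h => Zsqrtd.eq_of_smul_eq_smul_left hp0 h]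
  congr 2
  ext z
  exact and_right_comm.trans and_assoc

section PrimePower

variable {p : ℕ} (hp : p.Prime) (hp5 : 5 ≤ p) {w : ℤ√(-6)} (hw : w.norm = p ^ 2)
  (hpw : ¬ ((p : ℤ) : ℤ√(-6)) ∣ w) {m : ℕ} (hm : ¬ p ∣ m)

include hp hp5 hw hpw hm

theorem normCount_pow_succ_mul (j : ℕ) :
    normCount (p ^ (2 * (j + 1)) * m) =
      normCount (p ^ (2 * j) * m) + 2 * twistedCount (w ^ (j + 1)) m := by
  have hq : Prime (p : ℤ) := Nat.prime_iff_prime_int.mp hp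
  have hq6 := not_intCast_dvd_neg_six hp hp5
  have hq2 : ¬ (p : ℤ) ∣ 2 := fun h => hq6 (h.trans (by norm_num))
  have hwj : (w ^ (j + 1)).norm = p ^ (2 * (j + 1)) := by
    rw [pow_mul, ← hw]
    exact map_pow Zsqrtd.normMonoidHom w (j + 1)
  rw [twistedCount, ← ncard_primitive_eq_two_mul (C := fun z => ¬ 3 ∣ z.im) (by norm_num) hq hq2 hq6
    (by omega) hwj (not_intCast_dvd_pow hq hq2 hq6 (hw ▸ dvd_pow_self _ two_ne_zero) hpw j)
    (mod_cast hm) fun z hz => by rwa [Zsqrtd.im_star, dvd_neg],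
    mul_add_one, add_comm, pow_add, mul_assoc, normCount_prime_sq_mul hp (by omega),
    Nat.cast_mul, Nat.cast_pow, ← mul_assoc, ← pow_add]

theorem even_twistedCount (hm3 : ¬ 3 ∣ m) : Even (twistedCount w m) := by
  have hp3 : ¬ 3 ∣ p := (Nat.prime_dvd_prime_iff_eq Nat.prime_three hp).not.mpr (by omega)
  have hpm3 : ¬ 3 ∣ p ^ 2 * m :=
    Nat.prime_three.not_dvd_mul (mt Nat.prime_three.dvd_of_dvd_pow hp3) hm3
  have h := normCount_pow_succ_mul hp hp5 hw hpw hm 0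
  simp only [mul_zero, zero_add, mul_one, pow_zero, one_mul, pow_one, normCount_eq_four_mul hm3,
    normCount_eq_four_mul hpm3] at h
  rw [even_iff_two_dvd]
  omega

theorem normCount_pow_six_mul_modEq_of_norm_eq_sq (hm3 : ¬ 3 ∣ m) (k : ℕ) :
    normCount (p ^ (6 * k) * m) ≡ normCount m [MOD 8] := by
  have hp3 : ¬ (3 : ℤ) ∣ p := by
    exact_mod_cast (Nat.prime_dvd_prime_iff_eq Nat.prime_three hp).not.mpr (by omega)
  have hw3 (n : ℕ) : ¬ 3 ∣ (w ^ n).norm := by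
    rw [show (w ^ n).norm = w.norm ^ n from map_pow Zsqrtd.normMonoidHom w n, hw, ← pow_mul]
    exact mt Int.prime_three.dvd_of_dvd_pow hp3
  have hcube (n j : ℕ) : twistedCount (w ^ (3 * n + j)) m = twistedCount (w ^ j) m := by
    rw [pow_add, mul_comm 3, pow_mul, twistedCount_cube_mul (by norm_num) (hw3 n)]
  have hone : twistedCount (w ^ 0) m = normCount m := by
    simp only [twistedCount, pow_zero, one_mul, normCount]
  have hsq : twistedCount (w ^ 2) m = twistedCount (w ^ 1) m := by
    rw [twistedCount_sq (by norm_num) (pow_one w ▸ hw3 1), pow_one]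
  induction k with
  | zero => rw [mul_zero, pow_zero, one_mul]
  | succ k ih =>
    have hstep (i : ℕ) : normCount (p ^ (2 * (3 * k + i + 1)) * m) =
        normCount (p ^ (2 * (3 * k + i)) * m) + 2 * twistedCount (w ^ (i + 1)) m := by
      rw [normCount_pow_succ_mul hp hp5 hw hpw hm, add_assoc (3 * k), hcube]
    have hthree : twistedCount (w ^ 3) m = normCount m := (hcube 1 0).trans hone
    have hblock : normCount (p ^ (6 * (k + 1)) * m) = normCount (p ^ (6 * k) * m) +
        2 * (2 * twistedCount (w ^ 1) m + normCount m) := by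
      rw [show 6 * (k + 1) = 2 * (3 * k + 2 + 1) by ring, hstep 2, hstep 1, hstep 0, hsq, hthree,
        show 2 * (3 * k + 0) = 6 * k by ring]
      ring
    rw [hblock, normCount_eq_four_mul hm3, pow_one]
    rw [normCount_eq_four_mul hm3] at ih
    obtain ⟨a, ha⟩ := even_twistedCount hp hp5 hw hpw hm hm3
    unfold Nat.ModEq at ih ⊢
    omega

end PrimePower

theorem normCount_prime_pow_six_mul_modEq {p : ℕ} (hp : p.Prime) (hp5 : 5 ≤ p) {m : ℕ}
    (hm : ¬ p ∣ m) (hm3 : ¬ 3 ∣ m) (k : ℕ) :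
    normCount (p ^ (6 * k) * m) ≡ normCount m [MOD 8] := by
  by_cases hex : ∃ z : ℤ√(-6), (p : ℤ) ∣ z.norm ∧ ¬ ((p : ℤ) : ℤ√(-6)) ∣ z
  · obtain ⟨z, hz, hpz⟩ := hex
    obtain ⟨w, hw, hpw⟩ := exists_norm_eq_sq_of_dvd_norm hp hp5 hz hpz
    exact normCount_pow_six_mul_modEq_of_norm_eq_sq hp hp5 hw hpw hm hm3 k
  · have hsq (N : ℕ) : normCount (p ^ 2 * N) = normCount N := by
      rw [normCount_prime_sq_mul hp (by omega), Nat.add_eq_left, Set.ncard_eq_zero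
        ((finite_setOf_norm_eq (by norm_num) _).subset fun z hz => hz.1)]
      exact Set.eq_empty_of_forall_notMem fun z hz => hex
        ⟨z, hz.1 ▸ (dvd_pow_self _ two_ne_zero).mul_right _, hz.2.1⟩
    have hpow (j : ℕ) : normCount (p ^ (2 * j) * m) = normCount m := by
      induction j with
      | zero => rw [mul_zero, pow_zero, one_mul]
      | succ j ih => rw [mul_add_one, add_comm, pow_add, mul_assoc, hsq, ih]
    rw [show 6 * k = 2 * (3 * k) by ring, hpow]

theorem normCount_pow_six_mul_modEq {n : ℕ} (hn : n.Coprime 6) {m : ℕ} (hnm : n.Coprime m)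
    (hm3 : ¬ 3 ∣ m) : normCount (n ^ 6 * m) ≡ normCount m [MOD 8] := by
  induction n using Nat.recOnPosPrimePosCoprime generalizing m with
  | zero => exact absurd hn (by norm_num)
  | one => rw [one_pow, one_mul]
  | prime_pow p k hp hk =>
    rw [Nat.coprime_pow_left_iff hk] at hn hnm
    have hp5 : 5 ≤ p := by
      have hp2 := hp.two_le
      by_contra! hlt
      interval_cases p <;> revert hn <;> decide
    rw [← pow_mul, mul_comm k]
    exact normCount_prime_pow_six_mul_modEq hp hp5 (hp.coprime_iff_not_dvd.mp hnm) hm3 k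
  | coprime a b _ _ hab iha ihb =>
    have ha6 := hn.coprime_mul_right
    have hb6 := hn.coprime_mul_left
    have hb3 : ¬ 3 ∣ b := Nat.prime_three.coprime_iff_not_dvd.mp
      (hb6.coprime_dvd_right (by norm_num)).symm
    have hbm3 : ¬ 3 ∣ b ^ 6 * m :=
      Nat.prime_three.not_dvd_mul (mt Nat.prime_three.dvd_of_dvd_pow hb3) hm3
    rw [mul_pow, mul_assoc]
    exact (iha ha6 ((hab.pow_right 6).mul_right hnm.coprime_mul_right) hbm3).trans
      (ihb hb6 hnm.coprime_mul_left hm3)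

end ModThree

section Parity

theorem odd_ncard_iff_nonempty {α : Type*} {s : Set α} (hs : s.Subsingleton) :
    Odd s.ncard ↔ s.Nonempty := by
  obtain rfl | ⟨a, rfl⟩ := hs.eq_empty_or_singleton
  · simp only [Set.ncard_empty, Nat.not_odd_zero, Set.not_nonempty_empty]
  · simp only [Set.ncard_singleton, odd_one, Set.singleton_nonempty]

theorem subsingleton_setOf_sq_eq (n : ℕ) : {x : ℕ | x ^ 2 = n}.Subsingleton :=
  fun _ hx _ hy => Nat.pow_left_injective two_ne_zero (hx.trans hy.symm)

theorem odd_iff_of_two_mul_eq_ncard {d : ℤ} {P : ℕ → ℕ → Prop} (hP : ∀ x y, P x y → x ≠ 0)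
    (hfin : {z : ℤ√d | P z.re.natAbs z.im.natAbs}.Finite) (hsub : {x | P x 0}.Subsingleton)
    {c : ℕ} (hc : 4 * c = 2 * {z : ℤ√d | P z.re.natAbs z.im.natAbs}.ncard) :
    Odd c ↔ ∃ x, P x 0 := by
  rw [ncard_setOf_natAbs_of_re_ne_zero hP hfin] at hc
  obtain rfl : c = 2 * {a : ℕ × ℕ | P a.1 a.2 ∧ a.2 ≠ 0}.ncard + {x | P x 0}.ncard := by omega
  rw [Nat.odd_add', odd_ncard_iff_nonempty hsub]
  exact iff_true_right (even_two_mul _)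

theorem isSquare_of_isSquare_pow_mul {q m : ℕ} (hq : q.Prime) (hm : ¬ q ∣ m) {a : ℕ}
    (h : IsSquare (q ^ a * m)) : IsSquare m := by
  obtain ⟨c, hc⟩ := h
  have hcop : IsUnit (gcd m (q ^ a)) :=
    Nat.isUnit_iff.mpr (((hq.coprime_iff_not_dvd.mpr hm).symm).pow_right a)
  obtain ⟨r, hr⟩ := exists_eq_pow_of_mul_eq_pow hcop (by rw [mul_comm, hc, ← sq])
  exact hr ▸ IsSquare.sq r

theorem isSquare_pow_mul_or_isSquare_pow_succ_mul_iff {q m : ℕ} (hq : q.Prime) (hm : ¬ q ∣ m)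
    (a : ℕ) : IsSquare (q ^ a * m) ∨ IsSquare (q ^ (a + 1) * m) ↔ IsSquare m := by
  refine ⟨fun h => h.elim (isSquare_of_isSquare_pow_mul hq hm)
    (isSquare_of_isSquare_pow_mul hq hm), fun h => ?_⟩
  rcases Nat.even_or_odd a with ha | ha
  · exact Or.inl ((ha.isSquare_pow q).mul h)
  · exact Or.inr ((ha.add_one.isSquare_pow q).mul h)

end Parity

section NormThree

theorem ncard_sq_add_two_mul_sq {e m : ℕ} (hm : ¬ 3 ∣ m) :
    4 * {a : ℕ × ℕ | a.1 ^ 2 + 2 * a.2 ^ 2 = 3 ^ (e + 1) * m ∧ ¬ 3 ∣ a.1}.ncard =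
      2 * {z : ℤ√(-2) | z.re.natAbs ^ 2 + 2 * z.im.natAbs ^ 2 = m}.ncard := by
  have hpos : ∀ x y : ℕ, x ^ 2 + 2 * y ^ 2 = 3 ^ (e + 1) * m ∧ ¬ 3 ∣ x → x ≠ 0 ∧ y ≠ 0 := by
    rintro x y ⟨h, hx⟩
    constructor <;> rintro rfl
    · exact hx (dvd_zero 3)
    · refine hx (Nat.prime_three.dvd_of_dvd_pow (n := 2) ?_)
      rw [show x ^ 2 = 3 * (3 ^ e * m) by linear_combination h]
      exact dvd_mul_right _ _
  have hprim : {z : ℤ√(-2) | z.re.natAbs ^ 2 + 2 * z.im.natAbs ^ 2 = 3 ^ (e + 1) * m ∧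
      ¬ 3 ∣ z.re.natAbs} =
      {z : ℤ√(-2) | z.norm = (3 : ℤ) ^ (e + 1) * m ∧ ¬ ((3 : ℤ) : ℤ√(-2)) ∣ z ∧ True} := by
    ext z
    rw [Set.mem_ofPred_eq, Set.mem_ofPred_eq, and_true, ← norm_eq_iff_natAbs (c := 2) rfl]
    simp only [Nat.cast_mul, Nat.cast_pow, Nat.cast_ofNat]
    refine and_congr_right fun hz => not_congr ?_
    have h3 : 3 ∣ z.norm := hz ▸ (dvd_pow_self 3 e.succ_ne_zero).mul_right _
    rw [intCast_dvd_iff_dvd_re Int.prime_three (by norm_num) h3]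
    exact Int.natCast_dvd.symm
  have hnorm : (⟨1, 1⟩ ^ (e + 1) : ℤ√(-2)).norm = (3 : ℤ) ^ (e + 1) :=
    map_pow Zsqrtd.normMonoidHom ⟨1, 1⟩ (e + 1)
  have hndvd : ¬ ((3 : ℤ) : ℤ√(-2)) ∣ ⟨1, 1⟩ ^ (e + 1) :=
    not_intCast_dvd_pow Int.prime_three (by norm_num) (by norm_num) ⟨1, rfl⟩
      (by rw [Zsqrtd.intCast_dvd]; norm_num) e
  rw [← ncard_setOf_natAbs (d := -2) hpos, hprim, ncard_primitive_eq_two_mul (by norm_num)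
    Int.prime_three (by norm_num) (by norm_num) e.succ_ne_zero hnorm hndvd
    (by exact_mod_cast hm) fun _ _ => trivial]
  simp only [and_true, norm_eq_iff_natAbs (c := 2) (d := -2) rfl]

theorem odd_ncard_sq_add_two_mul_sq {K : ℕ} (hK : Odd K) :
    Odd {a : ℕ × ℕ | a.1 ^ 2 + 2 * a.2 ^ 2 = 3 * K ∧ ¬ 3 ∣ a.1}.ncard ↔
      IsSquare K ∨ IsSquare (3 * K) := by
  obtain ⟨e, m, hm, rfl⟩ :=
    Nat.exists_eq_pow_mul_and_not_dvd hK.pos.ne' 3 (by norm_num)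
  have hmodd : Odd m := (Nat.odd_mul.mp hK).2
  rw [← mul_assoc, ← pow_succ', isSquare_pow_mul_or_isSquare_pow_succ_mul_iff Nat.prime_three hm]
  have hre : ∀ x y : ℕ, x ^ 2 + 2 * y ^ 2 = m → x ≠ 0 := by
    rintro _ y rfl rfl
    rw [Nat.odd_iff] at hmodd
    omega
  have hfin : {z : ℤ√(-2) | z.re.natAbs ^ 2 + 2 * z.im.natAbs ^ 2 = m}.Finite := by
    simp only [← norm_eq_iff_natAbs (c := 2) (d := -2) rfl]
    exact finite_setOf_norm_eq (by norm_num) m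
  have hsub : {x : ℕ | x ^ 2 + 2 * 0 ^ 2 = m}.Subsingleton := subsingleton_setOf_sq_eq m
  rw [odd_iff_of_two_mul_eq_ncard hre hfin hsub (ncard_sq_add_two_mul_sq hm)]
  simp only [isSquare_iff_exists_sq, eq_comm (a := m)]
  rfl

end NormThree

section NormSixteen

theorem three_one_dvd_iff {z : ℤ√(-7)} : (⟨3, 1⟩ : ℤ√(-7)) ∣ z ↔ 16 ∣ 3 * z.im - z.re := by
  constructor
  · rintro ⟨y, rfl⟩
    refine ⟨y.im, ?_⟩
    rw [Zsqrtd.re_mul, Zsqrtd.im_mul]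
    ring
  · rintro ⟨y, hy⟩
    refine ⟨⟨z.im - 3 * y, y⟩, ?_⟩
    ext <;> simp only [Zsqrtd.re_mul, Zsqrtd.im_mul] <;> linarith

theorem xor_three_one_dvd {z : ℤ√(-7)} {M : ℤ} (hM : Odd M) (hz : z.norm = 16 * M)
    (hre : Odd z.re) : Xor ((⟨3, 1⟩ : ℤ√(-7)) ∣ z) (star ⟨3, 1⟩ ∣ z) := by
  rw [star_dvd_iff, three_one_dvd_iff, three_one_dvd_iff, Zsqrtd.re_star, Zsqrtd.im_star]
  have hnorm : z.re ^ 2 + 7 * z.im ^ 2 = 16 * M := by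
    rw [← hz, Zsqrtd.norm_def]
    ring
  have him : Odd z.im := by
    have h : Odd (7 * z.im ^ 2) := by
      rw [show 7 * z.im ^ 2 = 2 * (8 * M) - z.re ^ 2 by linear_combination hnorm]
      exact (even_two_mul _).sub_odd hre.pow
    exact Int.odd_pow' two_ne_zero |>.mp (Int.odd_mul.mp h).2
  obtain ⟨s, hs⟩ : Even (3 * z.im - z.re) := ((by decide : Odd (3 : ℤ)).mul him).sub_odd hre
  have hdvd : (2 : ℤ) ^ 3 ∣ s * (3 * z.im - s) := by
    obtain ⟨c, hc⟩ : Even (z.im ^ 2 - M) := him.pow.sub_odd hM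
    refine ⟨c, mul_left_cancel₀ (four_ne_zero (α := ℤ)) ?_⟩
    linear_combination 16 * hc - hnorm - (z.re + 3 * z.im - 2 * s) * hs
  have hor : (2 : ℤ) ^ 3 ∣ s ∨ (2 : ℤ) ^ 3 ∣ 3 * z.im - s := by
    rcases Int.even_or_odd s with hs2 | hs2
    · have ht : Odd (3 * z.im - s) := ((by decide : Odd (3 : ℤ)).mul him).sub_even hs2
      exact Or.inl ((Int.isCoprime_two_left.mpr ht).pow_left.dvd_of_dvd_mul_right hdvd)
    · exact Or.inr ((Int.isCoprime_two_left.mpr hs2).pow_left.dvd_of_dvd_mul_left hdvd)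
  rw [Int.odd_iff] at him
  unfold Xor
  omega

theorem norm_three_one_mul (y : ℤ√(-7)) : ((⟨3, 1⟩ : ℤ√(-7)) * y).norm = 16 * y.norm := by
  rw [Zsqrtd.norm_mul]
  rfl

theorem odd_re_three_one_mul {y : ℤ√(-7)} (hy : Odd y.norm) :
    Odd ((⟨3, 1⟩ : ℤ√(-7)) * y).re := by
  have hre : ((⟨3, 1⟩ : ℤ√(-7)) * y).re =
      y.norm - y.re * (y.re - 1) - 7 * (y.im * (y.im + 1)) + 2 * y.re := by
    rw [Zsqrtd.re_mul, Zsqrtd.norm_def]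
    ring
  rw [hre]
  exact ((hy.sub_even (Int.even_mul_pred_self _)).sub_even
    ((Int.even_mul_succ_self _).mul_left 7)).add_even (even_two_mul _)

theorem ncard_sq_add_seven_mul_sq {M : ℕ} (hM : Odd M) :
    4 * {a : ℕ × ℕ | a.1 ^ 2 + 7 * a.2 ^ 2 = 16 * M ∧ Odd a.1 ∧ ¬ 3 ∣ a.2}.ncard =
      2 * {z : ℤ√(-7) | z.re.natAbs ^ 2 + 7 * z.im.natAbs ^ 2 = M ∧ ¬ 3 ∣ z.re.natAbs}.ncard := by
  have hpos : ∀ x y : ℕ, x ^ 2 + 7 * y ^ 2 = 16 * M ∧ Odd x ∧ ¬ 3 ∣ y → x ≠ 0 ∧ y ≠ 0 := by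
    rintro x y ⟨-, hx, hy⟩
    exact ⟨hx.pos.ne', fun h => hy (h ▸ dvd_zero 3)⟩
  rw [← ncard_setOf_natAbs (d := -7) hpos]
  simp only [← norm_eq_iff_natAbs (c := 7) (d := -7) rfl, Int.natAbs_odd, ← Int.ofNat_dvd_left,
    Nat.cast_mul, Nat.cast_ofNat]
  rw [ncard_eq_two_mul_of_xor_dvd (w := ⟨3, 1⟩)]
  · congr 2
    ext y
    have hiff : (⟨3, 1⟩ * y : ℤ√(-7)).norm = 16 * M ↔ y.norm = M := by
      rw [norm_three_one_mul, mul_right_inj' (by norm_num)]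
    simp only [Set.mem_ofPred_eq, hiff]
    refine and_congr_right fun hy => ?_
    rw [and_iff_right (odd_re_three_one_mul (hy ▸ hM.natCast)), Zsqrtd.im_mul,
      dvd_add_right (Dvd.intro _ rfl), one_mul]
  · exact (finite_setOf_norm_eq (by norm_num) _).subset fun z hz => hz.1
  · rintro z ⟨hz, hre, him⟩
    exact ⟨by rwa [Zsqrtd.norm_conj], hre, by rwa [Zsqrtd.im_star, dvd_neg]⟩
  · norm_num [Zsqrtd.norm_def]
  · rintro z ⟨hz, hre, -⟩
    exact xor_three_one_dvd hM.natCast hz hre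

theorem odd_ncard_sq_add_seven_mul_sq {M : ℕ} (hM : Odd M) :
    Odd {a : ℕ × ℕ | a.1 ^ 2 + 7 * a.2 ^ 2 = 16 * M ∧ Odd a.1 ∧ ¬ 3 ∣ a.2}.ncard ↔
      ∃ x, x ^ 2 = M ∧ ¬ 3 ∣ x := by
  have hre : ∀ x y : ℕ, x ^ 2 + 7 * y ^ 2 = M ∧ ¬ 3 ∣ x → x ≠ 0 := by
    rintro x y ⟨-, hx⟩ rfl
    exact hx (dvd_zero 3)
  have hfin : {z : ℤ√(-7) | z.re.natAbs ^ 2 + 7 * z.im.natAbs ^ 2 = M ∧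
      ¬ 3 ∣ z.re.natAbs}.Finite := by
    simp only [← norm_eq_iff_natAbs (c := 7) (d := -7) rfl]
    exact (finite_setOf_norm_eq (by norm_num) M).subset fun z hz => hz.1
  have hsub : {x : ℕ | x ^ 2 + 7 * 0 ^ 2 = M ∧ ¬ 3 ∣ x}.Subsingleton :=
    (subsingleton_setOf_sq_eq M).anti fun x hx => hx.1
  exact odd_iff_of_two_mul_eq_ncard hre hfin hsub (ncard_sq_add_seven_mul_sq hM)

end NormSixteen

section Squares

theorem not_dvd_of_sq_eq {q r x i : ℕ} (hqr : q ∣ r) (hq : q ≠ 1) (h : x ^ 2 = r * i + 1) :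
    ¬ q ∣ x := fun hx =>
  hq <| Nat.dvd_one.mp <| (Nat.dvd_add_right (hqr.mul_right i)).mp <|
    h ▸ dvd_pow hx two_ne_zero

theorem exists_sq_eq_mul_add_one {r x : ℕ} (hr : r ∣ 24) (hr1 : r ≠ 1) (hx : x.Coprime r) :
    ∃ i, x ^ 2 = r * i + 1 := by
  have hdec : ∀ r ∈ Nat.divisors 24, r ≠ 1 → ∀ t < r, t.Coprime r → t ^ 2 % r = 1 := by decide
  have hmod := hdec r (Nat.mem_divisors.mpr ⟨hr, by norm_num⟩) hr1 (x % r)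
    (Nat.mod_lt _ (Nat.pos_of_dvd_of_pos hr (by norm_num))) ((Nat.mod_modEq x r).gcd_eq.trans hx)
  rw [← Nat.pow_mod] at hmod
  exact ⟨x ^ 2 / r, by rw [← hmod, Nat.div_add_mod]⟩

theorem odd_of_sq_mod_two_eq_one {x : ℕ} (h : x ^ 2 % 2 = 1) : Odd x :=
  (Nat.odd_pow_iff two_ne_zero).mp (Nat.odd_iff.mpr h)

theorem exists_sq_eq_three_mul_add_one_iff {x : ℕ} : (∃ i, x ^ 2 = 3 * i + 1) ↔ ¬ 3 ∣ x :=
  ⟨fun ⟨_, h⟩ => not_dvd_of_sq_eq dvd_rfl (by norm_num) h, fun h =>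
    exists_sq_eq_mul_add_one (by norm_num) (by norm_num)
      ((Nat.prime_three.coprime_iff_not_dvd.mpr h).symm)⟩

theorem exists_sq_eq_eight_mul_add_one_iff {x : ℕ} : (∃ i, x ^ 2 = 8 * i + 1) ↔ Odd x := by
  rw [← Nat.not_even_iff_odd, even_iff_two_dvd]
  exact ⟨fun ⟨_, h⟩ => not_dvd_of_sq_eq (by norm_num) (by norm_num) h, fun h =>
    exists_sq_eq_mul_add_one (by norm_num) (by norm_num)
      (((Nat.prime_two.coprime_iff_not_dvd.mpr h).symm).pow_right 3)⟩

theorem exists_sq_eq_twentyfour_mul_add_one_iff {x : ℕ} :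
    (∃ i, x ^ 2 = 24 * i + 1) ↔ Odd x ∧ ¬ 3 ∣ x := by
  rw [← exists_sq_eq_three_mul_add_one_iff, ← exists_sq_eq_eight_mul_add_one_iff]
  exact ⟨fun ⟨i, h⟩ => ⟨⟨3 * i, by omega⟩, ⟨8 * i, by omega⟩⟩,
    fun ⟨⟨i, hi⟩, ⟨j, _⟩⟩ => ⟨i / 3, by omega⟩⟩

end Squares

section Series

open PowerSeries

/-- The generating function modulo 2 of the `i` for which `r * i + 1` is a square. For `r = 24` and
`r = 8` it is the reduction of `∏ (1 - q ^ n)` and of its cube. -/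
def squareSeries (r : ℕ) : (ZMod 2)⟦X⟧ :=
  mk fun i => if IsSquare (r * i + 1) then 1 else 0

theorem coeff_expand_squareSeries {b s n k : ℕ} (hb : b ≠ 0)
    (hk : Odd k ↔ ∃ j, b * j = n ∧ IsSquare (s * j + 1)) :
    coeff n (expand b hb (squareSeries s)) = k := by
  rw [coeff_expand]
  split_ifs with hbn
  · obtain ⟨j, rfl⟩ := hbn
    simp only [mul_right_inj' hb, exists_eq_left] at hk
    rw [Nat.mul_div_cancel_left _ (Nat.pos_of_ne_zero hb), squareSeries, coeff_mk]
    split_ifs with hsq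
    · exact (ZMod.natCast_eq_one_iff_odd.mpr (hk.mpr hsq)).symm
    · exact (ZMod.natCast_eq_zero_iff_even.mpr (Nat.not_odd_iff_even.mp (mt hk.mp hsq))).symm
  · refine (ZMod.natCast_eq_zero_iff_even.mpr (Nat.not_odd_iff_even.mp ?_)).symm
    rw [hk]
    rintro ⟨j, rfl, -⟩
    exact hbn (dvd_mul_right b j)

theorem ncard_sq_eq_mul_add_one {r s : ℕ} (hr : r ≠ 0) (hs : s ≠ 0) (P : ℕ → ℕ → Prop) :
    {a : ℕ × ℕ | ∃ i j, P i j ∧ a.1 ^ 2 = r * i + 1 ∧ a.2 ^ 2 = s * j + 1}.ncard =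
      {v : ℕ × ℕ | P v.1 v.2 ∧ IsSquare (r * v.1 + 1) ∧ IsSquare (s * v.2 + 1)}.ncard := by
  let f : ℕ × ℕ → ℕ × ℕ := fun v => ((r * v.1 + 1).sqrt, (s * v.2 + 1).sqrt)
  have hinj : Set.InjOn f
      {v : ℕ × ℕ | P v.1 v.2 ∧ IsSquare (r * v.1 + 1) ∧ IsSquare (s * v.2 + 1)} := by
    rintro ⟨i, j⟩ ⟨-, ⟨x, hx⟩, ⟨y, hy⟩⟩ ⟨i', j'⟩ ⟨-, ⟨x', hx'⟩, ⟨y', hy'⟩⟩ h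
    simp only [f, hx, hy, hx', hy', Nat.sqrt_eq, Prod.mk.injEq] at h
    obtain ⟨rfl, rfl⟩ := h
    exact Prod.ext (mul_left_cancel₀ hr (Nat.succ_injective (hx.trans hx'.symm)))
      (mul_left_cancel₀ hs (Nat.succ_injective (hy.trans hy'.symm)))
  rw [← hinj.ncard_image]
  congr 1
  ext ⟨x, y⟩
  constructor
  · rintro ⟨i, j, hP, hx, hy⟩
    refine ⟨(i, j), ⟨hP, hx ▸ IsSquare.sq x, hy ▸ IsSquare.sq y⟩, ?_⟩
    simp only [f, ← hx, ← hy, Nat.sqrt_eq']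
  · rintro ⟨⟨i, j⟩, ⟨hP, ⟨x', hx⟩, ⟨y', hy⟩⟩, h⟩
    simp only [f, hx, hy, Nat.sqrt_eq, Prod.mk.injEq] at h
    obtain ⟨rfl, rfl⟩ := h
    exact ⟨i, j, hP, by rw [hx, sq], by rw [hy, sq]⟩

theorem coeff_squareSeries_mul_expand {r s b : ℕ} (hr : r ≠ 0) (hs : s ≠ 0) (hb : b ≠ 0) (n : ℕ) :
    coeff n (squareSeries r * expand b hb (squareSeries s)) =
      ({a : ℕ × ℕ | ∃ i j, i + b * j = n ∧ a.1 ^ 2 = r * i + 1 ∧ a.2 ^ 2 = s * j + 1}.ncard :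
        ZMod 2) := by
  have hinj : Function.Injective fun v : ℕ × ℕ => (v.1, b * v.2) :=
    Function.injective_id.prodMap (mul_right_injective₀ hb)
  rw [ncard_sq_eq_mul_add_one hr hs fun i j => i + b * j = n,
    ← Set.ncard_image_of_injective _ hinj, coeff_mul]
  simp only [coeff_expand, squareSeries, coeff_mk, mul_ite, mul_one, mul_zero, ← ite_and,
    Finset.sum_boole]
  rw [← Set.ncard_coe_finset]
  congr 2
  ext ⟨i, j⟩
  simp only [Finset.coe_filter, Finset.HasAntidiagonal.mem_antidiagonal, Set.mem_ofPred_eq,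
    Set.mem_image, Prod.exists, Prod.mk.injEq]
  constructor
  · rintro ⟨hn, ⟨⟨j, rfl⟩, hj⟩, hi⟩
    rw [Nat.mul_div_cancel_left _ (Nat.pos_of_ne_zero hb)] at hj
    exact ⟨i, j, ⟨hn, hi, hj⟩, rfl, rfl⟩
  · rintro ⟨i, j, ⟨hn, hi, hj⟩, rfl, rfl⟩
    rw [Nat.mul_div_cancel_left _ (Nat.pos_of_ne_zero hb)]
    exact ⟨hn, ⟨dvd_mul_right b j, hj⟩, hi⟩

theorem squareSeries_twentyfour_mul_expand_two :
    squareSeries 24 * expand 2 (by norm_num) (squareSeries 24) = squareSeries 8 := by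
  ext n
  rw [coeff_squareSeries_mul_expand (by norm_num) (by norm_num),
    ← expand_one_apply (squareSeries 8)]
  refine (coeff_expand_squareSeries one_ne_zero ?_).symm
  have hset : {a : ℕ × ℕ | ∃ i j, i + 2 * j = n ∧ a.1 ^ 2 = 24 * i + 1 ∧ a.2 ^ 2 = 24 * j + 1} =
      {a | a.1 ^ 2 + 2 * a.2 ^ 2 = 3 * (8 * n + 1) ∧ ¬ 3 ∣ a.1} := by
    ext ⟨x, y⟩
    constructor
    · rintro ⟨i, j, rfl, hx, hy⟩
      exact ⟨by rw [hx, hy]; ring, not_dvd_of_sq_eq (by norm_num) (by norm_num) hx⟩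
    · rintro ⟨h, hx3⟩
      dsimp only at h hx3
      have hx : Odd x := odd_of_sq_mod_two_eq_one (by omega)
      obtain ⟨i, hi⟩ := exists_sq_eq_twentyfour_mul_add_one_iff.mpr ⟨hx, hx3⟩
      have hy : Odd y := odd_of_sq_mod_two_eq_one (by omega)
      have hy3 : ¬ 3 ∣ y := fun hy3 => by
        have := dvd_pow hy3 two_ne_zero
        omega
      obtain ⟨j, hj⟩ := exists_sq_eq_twentyfour_mul_add_one_iff.mpr ⟨hy, hy3⟩
      exact ⟨i, j, by omega, hi, hj⟩
  have h3K : ¬ IsSquare (3 * (8 * n + 1)) := by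
    rw [isSquare_iff_exists_sq]
    rintro ⟨z, hz⟩
    obtain ⟨i, hi⟩ := exists_sq_eq_eight_mul_add_one_iff.mpr
      (odd_of_sq_mod_two_eq_one (x := z) (by omega))
    omega
  rw [hset, odd_ncard_sq_add_two_mul_sq (by grind), or_iff_left h3K]
  simp only [one_mul, exists_eq_left]

theorem isSquare_three_mul_eight_mul_add_three_iff {n : ℕ} :
    IsSquare (3 * (8 * n + 3)) ↔ ∃ j, 3 * j = n ∧ IsSquare (8 * j + 1) := by
  simp only [isSquare_iff_exists_sq]
  constructor
  · rintro ⟨z, hz⟩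
    obtain ⟨w, rfl⟩ : 3 ∣ z := Nat.prime_three.dvd_of_dvd_pow (hz ▸ dvd_mul_right 3 _)
    rw [mul_pow] at hz
    exact ⟨n / 3, by omega, w, by omega⟩
  · rintro ⟨j, rfl, w, hw⟩
    exact ⟨3 * w, by rw [mul_pow, ← hw]; ring⟩

theorem squareSeries_twentyfour_mul_three :
    squareSeries 24 * squareSeries 3 = expand 3 (by norm_num) (squareSeries 8) := by
  ext n
  rw [← expand_one_apply (squareSeries 3),
    coeff_squareSeries_mul_expand (by norm_num) (by norm_num)]
  refine (coeff_expand_squareSeries (by norm_num) ?_).symm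
  have himage : (fun a : ℕ × ℕ => (a.1, 2 * a.2)) ''
      {a | ∃ i j, i + 1 * j = n ∧ a.1 ^ 2 = 24 * i + 1 ∧ a.2 ^ 2 = 3 * j + 1} =
      {a | a.1 ^ 2 + 2 * a.2 ^ 2 = 3 * (8 * n + 3) ∧ ¬ 3 ∣ a.1} := by
    ext ⟨x, y⟩
    constructor
    · rintro ⟨⟨x, y⟩, ⟨i, j, rfl, hx, hy⟩, h⟩
      obtain ⟨rfl, rfl⟩ := Prod.mk.inj h
      refine ⟨?_, not_dvd_of_sq_eq (by norm_num) (by norm_num) hx⟩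
      rw [mul_pow, hx, hy]
      ring
    · rintro ⟨h, hx3⟩
      dsimp only at h hx3
      have hx : Odd x := odd_of_sq_mod_two_eq_one (by omega)
      obtain ⟨i, hi⟩ := exists_sq_eq_twentyfour_mul_add_one_iff.mpr ⟨hx, hx3⟩
      obtain ⟨w, rfl⟩ : 2 ∣ y := Nat.prime_two.dvd_of_dvd_pow (n := 2) (by omega)
      rw [mul_pow] at h
      have hw3 : ¬ 3 ∣ w := fun hw3 => by
        have := dvd_pow hw3 two_ne_zero
        omega
      obtain ⟨j, hj⟩ := exists_sq_eq_three_mul_add_one_iff.mpr hw3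
      exact ⟨(x, w), ⟨i, j, by omega, hi, hj⟩, rfl⟩
  have hinj : Function.Injective fun a : ℕ × ℕ => (a.1, 2 * a.2) :=
    Function.injective_id.prodMap (mul_right_injective₀ two_ne_zero)
  have hK : ¬ IsSquare (8 * n + 3) := by
    rw [isSquare_iff_exists_sq]
    rintro ⟨z, hz⟩
    obtain ⟨i, hi⟩ := exists_sq_eq_eight_mul_add_one_iff.mpr
      (odd_of_sq_mod_two_eq_one (x := z) (by omega))
    omega
  rw [← Set.ncard_image_of_injective _ hinj, himage, odd_ncard_sq_add_two_mul_sq (by grind),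
    or_iff_right hK, isSquare_three_mul_eight_mul_add_three_iff]

theorem coeff_squareSeries_eight_mul_expand (m : ℕ) :
    coeff (4 * m + 1) (squareSeries 8 * expand 21 (by norm_num) (squareSeries 24)) =
      coeff m (expand 12 (by norm_num) (squareSeries 24)) := by
  rw [coeff_squareSeries_mul_expand (by norm_num) (by norm_num)]
  refine (coeff_expand_squareSeries (by norm_num) ?_).symm
  have hset : {a : ℕ × ℕ | ∃ i j, i + 21 * j = 4 * m + 1 ∧ a.1 ^ 2 = 8 * i + 1 ∧
      a.2 ^ 2 = 24 * j + 1} =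
      {a | a.1 ^ 2 + 7 * a.2 ^ 2 = 16 * (2 * m + 1) ∧ Odd a.1 ∧ ¬ 3 ∣ a.2} := by
    ext ⟨x, y⟩
    constructor
    · rintro ⟨i, j, hn, hx, hy⟩
      refine ⟨?_, exists_sq_eq_eight_mul_add_one_iff.mp ⟨i, hx⟩,
        not_dvd_of_sq_eq (by norm_num) (by norm_num) hy⟩
      dsimp only at hx hy ⊢
      omega
    · rintro ⟨h, hx, hy3⟩
      dsimp only at h hx hy3
      obtain ⟨i, hi⟩ := exists_sq_eq_eight_mul_add_one_iff.mpr hx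
      have hy : Odd y := odd_of_sq_mod_two_eq_one (by omega)
      obtain ⟨j, hj⟩ := exists_sq_eq_twentyfour_mul_add_one_iff.mpr ⟨hy, hy3⟩
      exact ⟨i, j, by omega, hi, hj⟩
  rw [hset, odd_ncard_sq_add_seven_mul_sq (by grind)]
  constructor
  · rintro ⟨x, hx, hx3⟩
    obtain ⟨j, hj⟩ := exists_sq_eq_twentyfour_mul_add_one_iff.mpr
      ⟨odd_of_sq_mod_two_eq_one (by omega), hx3⟩
    exact ⟨j, by omega, hj ▸ IsSquare.sq x⟩
  · rintro ⟨j, rfl, hj⟩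
    obtain ⟨x, hx⟩ := (isSquare_iff_exists_sq _).mp hj
    exact ⟨x, by omega, not_dvd_of_sq_eq (by norm_num) (by norm_num) hx.symm⟩

end Series

section GeneratingFunction

open PowerSeries

theorem mem_range_pentagonal_iff {n : ℕ} : n ∈ Set.range pentagonal ↔ IsSquare (24 * n + 1) := by
  rw [isSquare_iff_exists_sq]
  constructor
  · rintro ⟨k, rfl⟩
    refine ⟨(6 * k - 1).natAbs, ?_⟩
    zify
    rw [sq_abs]
    linear_combination 12 * two_mul_natCast_pentagonal k
  · rintro ⟨x, hx⟩
    obtain ⟨hodd, h3⟩ := exists_sq_eq_twentyfour_mul_add_one_iff.mp ⟨n, hx.symm⟩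
    obtain ⟨k, hk⟩ : ∃ k : ℤ, x ^ 2 = (6 * k - 1) ^ 2 := by
      rcases (by grind : x % 6 = 1 ∨ x % 6 = 5) with h | h
      · exact ⟨-(x / 6 : ℕ), by rw [show (x : ℤ) = 6 * (x / 6 : ℕ) + 1 by omega]; ring⟩
      · exact ⟨(x / 6 : ℕ) + 1, by rw [show (x : ℤ) = 6 * (x / 6 : ℕ) + 5 by omega]; ring⟩
    refine ⟨k, ?_⟩
    zify at hx ⊢
    linarith [two_mul_natCast_pentagonal k]

theorem pentagonalSeries_zmod_two : pentagonalSeries (ZMod 2) = squareSeries 24 := by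
  ext n
  rw [squareSeries, coeff_mk]
  split_ifs with hn
  · refine (by decide : ∀ a : ZMod 2, a ≠ 0 → a = 1) _ fun h0 => ?_
    exact (coeff_pentagonalSeries_eq_zero_iff _).mp h0 (mem_range_pentagonal_iff.mpr hn)
  · rwa [coeff_pentagonalSeries_eq_zero_iff, mem_range_pentagonal_iff]

open scoped PowerSeries.WithPiTopology in
theorem continuous_powerSeries_expand {R : Type*} [CommRing R] [TopologicalSpace R] {m : ℕ}
    (hm : m ≠ 0) : Continuous (expand m hm : R⟦X⟧ →ₐ[R] R⟦X⟧) := by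
  refine continuous_iff_continuousAt.mpr fun f => ?_
  rw [ContinuousAt, WithPiTopology.tendsto_iff_coeff_tendsto]
  intro d
  simp only [coeff_expand]
  split_ifs
  · exact (WithPiTopology.continuous_coeff R _).continuousAt
  · exact tendsto_const_nhds

open scoped PowerSeries.WithPiTopology in
theorem mk_card_restricted_mul_pentagonalSeries (R : Type*) [CommRing R] {m : ℕ} (hm : m ≠ 0) :
    mk (fun n => ((Nat.Partition.restricted n (¬ m ∣ ·)).card : R)) * pentagonalSeries R =
      expand m hm (pentagonalSeries R) := by
  let _ : TopologicalSpace R := ⊥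
  have _ : DiscreteTopology R := ⟨rfl⟩
  have hm0 : 0 < m := Nat.pos_of_ne_zero hm
  have heuler := WithPiTopology.hasProd_one_sub_X_pow R
  have hprod := (Nat.Partition.hasProd_powerSeriesMk_card_countRestricted R hm0).mul heuler
  have hexpand := heuler.map (expand m hm : R⟦X⟧ →ₐ[R] R⟦X⟧) (continuous_powerSeries_expand hm)
  have hfactor : (expand m hm : R⟦X⟧ →ₐ[R] R⟦X⟧) ∘ (fun i => 1 - X ^ (i + 1)) =
      fun i => (∑ j ∈ Finset.range m, X ^ ((i + 1) * j)) * (1 - X ^ (i + 1)) := by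
    funext i
    simp only [Function.comp_apply, map_sub, map_one, map_pow, expand_X, pow_mul, geom_sum_mul_neg]
    rw [← pow_mul, ← pow_mul, mul_comm]
  rw [hfactor] at hexpand
  simp only [Nat.Partition.card_restricted_eq_card_countRestricted _ hm0]
  exact hprod.unique hexpand

theorem mk_b21_mul_squareSeries :
    mk (fun n => (b21 n : ZMod 2)) * squareSeries 24 =
      expand 21 (by norm_num) (squareSeries 24) := by
  rw [← pentagonalSeries_zmod_two]
  exact mk_card_restricted_mul_pentagonalSeries (ZMod 2) (m := 21) (by norm_num)

theorem sq_eq_expand_two (f : (ZMod 2)⟦X⟧) : f ^ 2 = expand 2 two_ne_zero f := by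
  have h := MvPowerSeries.map_frobenius_expand (R := ZMod 2) (σ := Unit) 2 two_ne_zero (f := f)
  rw [ZMod.frobenius_zmod, MvPowerSeries.map_id] at h
  exact h.symm

theorem expand_four_squareSeries :
    expand 4 four_ne_zero (squareSeries 24) = squareSeries 24 * squareSeries 8 := by
  calc expand 4 four_ne_zero (squareSeries 24)
      = expand 2 two_ne_zero (expand 2 two_ne_zero (squareSeries 24)) :=
        expand_mul 2 two_ne_zero 2 two_ne_zero _
    _ = squareSeries 24 ^ 2 * expand 2 two_ne_zero (squareSeries 24) := by
        rw [← sq_eq_expand_two (squareSeries 24), map_pow, sq, ← sq_eq_expand_two]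
    _ = squareSeries 24 * squareSeries 8 := by
        rw [sq, mul_assoc, squareSeries_twentyfour_mul_expand_two]

/-- The component of a power series supported on the exponents congruent to `a` modulo `q`,
reindexed by `q * n + a ↦ n`. -/
noncomputable def dissection {R : Type*} [Semiring R] (q a : ℕ) (f : R⟦X⟧) : R⟦X⟧ :=
  mk fun n => coeff (q * n + a) f

theorem dissection_mul_expand {R : Type*} [CommRing R] {q a : ℕ} (hq : q ≠ 0) (ha : a < q)
    (f g : R⟦X⟧) : dissection q a (f * expand q hq g) = dissection q a f * g := by
  ext n
  rw [dissection, coeff_mk, coeff_mul, coeff_mul]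
  symm
  refine Finset.sum_of_injOn (fun v : ℕ × ℕ => (q * v.1 + a, q * v.2)) ?_ ?_ ?_ ?_
  · rintro ⟨i, j⟩ - ⟨i', j'⟩ - h
    simpa only [Prod.mk.injEq, add_left_inj, mul_right_inj' hq] using h
  · rintro ⟨i, j⟩ h
    simp only [Finset.mem_coe, Finset.HasAntidiagonal.mem_antidiagonal] at h ⊢
    rw [← h]
    ring
  · rintro ⟨i, j⟩ h hij
    rw [Finset.HasAntidiagonal.mem_antidiagonal] at h
    dsimp only at h ⊢
    rw [coeff_expand_of_not_dvd, mul_zero]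
    rintro ⟨j, rfl⟩
    have hjn : j ≤ n := by
      by_contra! hlt
      have := Nat.mul_le_mul_left q (Nat.succ_le_of_lt hlt)
      rw [Nat.mul_succ] at this
      omega
    obtain ⟨t, rfl⟩ := Nat.exists_eq_add_of_le' hjn
    refine hij ⟨(t, j), Finset.HasAntidiagonal.mem_antidiagonal.mpr rfl, ?_⟩
    rw [mul_add] at h
    exact Prod.ext (by dsimp only; omega) rfl
  · rintro ⟨i, j⟩ -
    rw [dissection, coeff_mk, coeff_expand_mul]

theorem squareSeries_ne_zero (r : ℕ) : squareSeries r ≠ 0 := fun h => by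
  have h0 := congrArg (coeff 0) h
  rw [squareSeries, coeff_mk, mul_zero, zero_add, if_pos (IsSquare.one), map_zero] at h0
  exact one_ne_zero h0

theorem dissection_mk_b21 :
    dissection 4 1 (mk fun n => (b21 n : ZMod 2)) =
      squareSeries 3 * expand 3 three_ne_zero (squareSeries 24) := by
  refine mul_right_cancel₀ (squareSeries_ne_zero 24) ?_
  calc dissection 4 1 (mk fun n => (b21 n : ZMod 2)) * squareSeries 24
      = dissection 4 1 ((mk fun n => (b21 n : ZMod 2)) *
          expand 4 four_ne_zero (squareSeries 24)) :=
        (dissection_mul_expand four_ne_zero (by norm_num : 1 < 4) _ _).symm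
    _ = dissection 4 1 (squareSeries 8 * expand 21 (by norm_num) (squareSeries 24)) := by
        rw [expand_four_squareSeries, ← mul_assoc, mk_b21_mul_squareSeries, mul_comm]
    _ = expand (3 * 4) (by norm_num) (squareSeries 24) := by
        ext m
        rw [dissection, coeff_mk, coeff_squareSeries_eight_mul_expand]
    _ = expand 3 three_ne_zero (squareSeries 24) * expand 3 three_ne_zero (squareSeries 8) := by
        rw [expand_mul 3 three_ne_zero 4 four_ne_zero, expand_four_squareSeries, map_mul]
    _ = squareSeries 3 * expand 3 three_ne_zero (squareSeries 24) * squareSeries 24 := by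
        rw [← squareSeries_twentyfour_mul_three]
        ring

end GeneratingFunction

theorem normCount_fortyeight_mul_add (n : ℕ) : normCount (48 * n + 22) =
    4 * {a : ℕ × ℕ | ∃ i j, i + 3 * j = n ∧ a.1 ^ 2 = 3 * i + 1 ∧ a.2 ^ 2 = 24 * j + 1}.ncard := by
  have hinj : Function.Injective fun a : ℕ × ℕ => (4 * a.1, a.2) :=
    (mul_right_injective₀ four_ne_zero).prodMap Function.injective_id
  rw [normCount_eq_four_mul (by omega), ← Set.ncard_image_of_injective {a | ∃ i j, _} hinj]
  congr 2
  ext ⟨x, y⟩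
  constructor
  · rintro ⟨h, hy3⟩
    dsimp only at h hy3
    obtain ⟨c, rfl⟩ : 2 ∣ x := Nat.prime_two.dvd_of_dvd_pow (n := 2) (by omega)
    rw [mul_pow] at h
    have hy : Odd y := odd_of_sq_mod_two_eq_one (by omega)
    obtain ⟨j, hj⟩ := exists_sq_eq_twentyfour_mul_add_one_iff.mpr ⟨hy, hy3⟩
    obtain ⟨d, rfl⟩ : 2 ∣ c := Nat.prime_two.dvd_of_dvd_pow (n := 2) (by omega)
    rw [mul_pow] at h
    exact ⟨(d, y), ⟨n - 3 * j, j, by omega, by dsimp only; omega, hj⟩,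
      Prod.ext (mul_assoc 2 2 d) rfl⟩
  · rintro ⟨⟨x, y⟩, ⟨i, j, rfl, hx, hy⟩, h⟩
    obtain ⟨rfl, rfl⟩ := Prod.mk.inj h
    refine ⟨?_, not_dvd_of_sq_eq (by norm_num) (by norm_num) hy⟩
    rw [mul_pow, hx, hy]
    ring

open PowerSeries in
theorem normCount_modEq_four_mul_b21 (n : ℕ) :
    normCount (48 * n + 22) ≡ 4 * b21 (4 * n + 1) [MOD 8] := by
  rw [normCount_fortyeight_mul_add]
  refine Nat.ModEq.mul_left' (n := 2) 4 ((ZMod.natCast_eq_natCast_iff _ _ _).mp ?_)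
  rw [← coeff_squareSeries_mul_expand three_ne_zero (by norm_num) three_ne_zero,
    ← dissection_mk_b21, dissection, coeff_mk, coeff_mk]

theorem normCount_twentytwo : normCount 22 = 4 := by
  have hsub : {a : ℕ × ℕ | a.1 ^ 2 + 6 * a.2 ^ 2 = 22 ∧ ¬ 3 ∣ a.2} = {(4, 1)} := by
    ext ⟨x, y⟩
    simp only [Set.mem_ofPred_eq, Set.mem_singleton_iff, Prod.mk.injEq]
    constructor
    · rintro ⟨h, -⟩
      have hx : x ≤ 4 := by nlinarith
      have hy : y ≤ 1 := by nlinarith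
      interval_cases x <;> interval_cases y <;> omega
    · rintro ⟨rfl, rfl⟩
      norm_num
  rw [normCount_eq_four_mul (by norm_num), hsub, Set.ncard_singleton]

theorem stmt_4_general {n : ℕ} (hn : n.Coprime 66) : Odd (b21 ((11 * n ^ 6 - 5) / 6)) := by
  have hn22 : n.Coprime 22 := hn.of_dvd_right (by norm_num)
  have hn6 : n.Coprime 6 := hn.of_dvd_right (by norm_num)
  have hn24 : (n ^ 3).Coprime 24 := (Nat.Coprime.pow 3 3 hn6).of_dvd_right (by norm_num)
  obtain ⟨j, hj⟩ := exists_sq_eq_mul_add_one dvd_rfl (by norm_num) hn24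
  rw [← pow_mul, show 3 * 2 = 6 from rfl] at hj
  have hmod : 4 * b21 (4 * (11 * j) + 1) ≡ 4 [MOD 8] :=
    calc 4 * b21 (4 * (11 * j) + 1) ≡ normCount (48 * (11 * j) + 22) [MOD 8] :=
          (normCount_modEq_four_mul_b21 _).symm
      _ = normCount (n ^ 6 * 22) := by rw [hj]; ring_nf
      _ ≡ normCount 22 [MOD 8] := normCount_pow_six_mul_modEq hn6 hn22 (by norm_num)
      _ = 4 := normCount_twentytwo
  rw [show (11 * n ^ 6 - 5) / 6 = 4 * (11 * j) + 1 by omega, Nat.odd_iff]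
  unfold Nat.ModEq at hmod
  omega

theorem stmt_4 (p : ℕ) (hp : p.Prime) (hp5 : 5 ≤ p) (hp11 : p ≠ 11)
    (h : Even (b21 ((11 * p ^ 2 - 5) / 6))) (k : ℕ) :
    Odd (b21 ((11 * p ^ (6 * k) - 5) / 6)) := by
  rw [pow_mul']
  refine stmt_4_general (Nat.Coprime.pow_left k ?_)
  rw [hp.coprime_iff_not_dvd, show 66 = 2 * 3 * 11 by rfl, hp.dvd_mul, hp.dvd_mul,
    Nat.prime_dvd_prime_iff_eq hp Nat.prime_two, Nat.prime_dvd_prime_iff_eq hp Nat.prime_three,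
    Nat.prime_dvd_prime_iff_eq hp (by norm_num)]
  omega
end

section
/- Let p be an odd prime and let j ∈ {1, 4, 8} be such that 8x^2 + 27y^2 = jp has a primitive solution. Let m be a positive integer such that p ∤ m and pm ≡ 11 (mod 24). Then the set U = {(u, v) ∈ ℤ² : 8u^2 + 27v^2 = pm and gcd(u, v) = 1} and the set A = {(a, b) ∈ ℤ² : a^2 + 216b^2 = jm and gcd(a, b) = 1} satisfy |U| = 2|A|. -/
/-!
Fix a primitive solution `r = (x, y)` of `c x² + d y² = j p`. Gauss composition with `r` sends a
representation `w = (a, b)` of `j m` by the principal form `a² + cd b²` to the vector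
`(x a + d y b, y a - c x b)`, which has norm `j² p m` for `c u² + d v²`. When this vector is
divisible by `j`, the quotient `z = (u, v)` represents `p m`, and `w` is recovered from it by
`p w = (c x u + d y v, y u - x v)`. The representations `z` of `p m` that arise in this way are
those with `p ∣ y u - x v`. Modulo `p`, `c (y u - x v) (y u + x v)` vanishes, so exactly one of
`(u, v)` and `(u, -v)` arises: this is the factor `2`.

For `c = 8` the divisibility by `j` is a `2`-adic matter, settled by the congruence
`p m ≡ d [ZMOD 8]`.
-/

section CommRing

variable {R : Type*} [CommRing R]

/-- The value at `z = (u, v)` of the diagonal binary quadratic form `c u² + d v²`. -/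
def diagForm (c d : R) (z : R × R) : R := c * z.1 ^ 2 + d * z.2 ^ 2

/-- The primitive representations of `n` by `c u² + d v²`, i.e. those with coprime coordinates. -/
def primitiveSolutions (c d n : R) : Set (R × R) :=
  {z | diagForm c d z = n ∧ IsCoprime z.1 z.2}

/-- Gauss composition of a vector `r`, measured by the form `c x² + d y²`, with a vector measured by
the principal form `a² + cd b²`. The result is measured by `c u² + d v²`. -/
def composePrincipal (c d : R) (r : R × R) : R × R →ₗ[R] R × R where
  toFun w := (r.1 * w.1 + d * r.2 * w.2, r.2 * w.1 - c * r.1 * w.2)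
  map_add' v w := by ext <;> simp only [Prod.fst_add, Prod.snd_add] <;> ring
  map_smul' k w := by
    ext <;> simp only [Prod.smul_fst, Prod.smul_snd, smul_eq_mul, RingHom.id_apply] <;> ring

/-- Gauss composition of two vectors measured by the same form `c u² + d v²`. The result is measured
by the principal form `a² + cd b²`. -/
def composeSelf (c d : R) (r : R × R) : R × R →ₗ[R] R × R where
  toFun z := (c * r.1 * z.1 + d * r.2 * z.2, r.2 * z.1 - r.1 * z.2)
  map_add' v w := by ext <;> simp only [Prod.fst_add, Prod.snd_add] <;> ring
  map_smul' k w := by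
    ext <;> simp only [Prod.smul_fst, Prod.smul_snd, smul_eq_mul, RingHom.id_apply] <;> ring

theorem composePrincipal_apply (c d : R) (r w : R × R) :
    composePrincipal c d r w = (r.1 * w.1 + d * r.2 * w.2, r.2 * w.1 - c * r.1 * w.2) :=
  rfl

theorem composeSelf_apply (c d : R) (r z : R × R) :
    composeSelf c d r z = (c * r.1 * z.1 + d * r.2 * z.2, r.2 * z.1 - r.1 * z.2) :=
  rfl

theorem diagForm_smul (c d k : R) (z : R × R) :
    diagForm c d (k • z) = k ^ 2 * diagForm c d z := by
  simp only [diagForm, Prod.smul_fst, Prod.smul_snd, smul_eq_mul]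
  ring

theorem diagForm_composePrincipal (c d : R) (r w : R × R) :
    diagForm c d (composePrincipal c d r w) = diagForm c d r * diagForm 1 (c * d) w := by
  simp only [diagForm, composePrincipal_apply]
  ring

theorem diagForm_composeSelf (c d : R) (r z : R × R) :
    diagForm 1 (c * d) (composeSelf c d r z) = diagForm c d r * diagForm c d z := by
  simp only [diagForm, composeSelf_apply]
  ring

theorem composeSelf_composePrincipal (c d : R) (r w : R × R) :
    composeSelf c d r (composePrincipal c d r w) = diagForm c d r • w := by
  ext <;> simp only [diagForm, composeSelf_apply, composePrincipal_apply, Prod.smul_fst,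
    Prod.smul_snd, smul_eq_mul] <;> ring

theorem composePrincipal_composeSelf (c d : R) (r z : R × R) :
    composePrincipal c d r (composeSelf c d r z) = diagForm c d r • z := by
  ext <;> simp only [diagForm, composeSelf_apply, composePrincipal_apply, Prod.smul_fst,
    Prod.smul_snd, smul_eq_mul] <;> ring

theorem dvd_composePrincipal {c d q : R} {r w : R × R} (h₁ : q ∣ w.1) (h₂ : q ∣ w.2) :
    q ∣ (composePrincipal c d r w).1 ∧ q ∣ (composePrincipal c d r w).2 :=
  ⟨dvd_add (h₁.mul_left _) (h₂.mul_left _), dvd_sub (h₁.mul_left _) (h₂.mul_left _)⟩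

theorem dvd_composeSelf {c d q : R} {r z : R × R} (h₁ : q ∣ z.1) (h₂ : q ∣ z.2) :
    q ∣ (composeSelf c d r z).1 ∧ q ∣ (composeSelf c d r z).2 :=
  ⟨dvd_add (h₁.mul_left _) (h₂.mul_left _), dvd_sub (h₁.mul_left _) (h₂.mul_left _)⟩

theorem dvd_of_isCoprime_of_dvd_smul {k q : R} {z : R × R} (hz : IsCoprime z.1 z.2)
    (h₁ : q ∣ (k • z).1) (h₂ : q ∣ (k • z).2) : q ∣ k := by
  obtain ⟨s, t, hst⟩ := hz
  have hk : k = s * (k * z.1) + t * (k * z.2) := by linear_combination -k * hst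
  rw [hk]
  exact dvd_add (h₁.mul_left s) (h₂.mul_left t)

theorem not_dvd_of_mem_primitiveSolutions {c d n p : R} (hp : Prime p) (hpc : ¬ p ∣ c)
    (hpd : ¬ p ∣ d) (hpn : p ∣ n) {z : R × R} (hz : z ∈ primitiveSolutions c d n) :
    ¬ p ∣ z.1 ∧ ¬ p ∣ z.2 := by
  have hsum : p ∣ c * z.1 ^ 2 + d * z.2 ^ 2 := hpn.trans hz.1.symm.dvd
  have hiff : p ∣ z.1 ↔ p ∣ z.2 := by
    constructor <;> intro h
    · have hd := (dvd_add_right ((h.pow two_ne_zero).mul_left c)).1 hsum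
      exact hp.dvd_of_dvd_pow ((hp.dvd_or_dvd hd).resolve_left hpd)
    · have hc := (dvd_add_left ((h.pow two_ne_zero).mul_left d)).1 hsum
      exact hp.dvd_of_dvd_pow ((hp.dvd_or_dvd hc).resolve_left hpc)
  have hfst : ¬ p ∣ z.1 := fun h ↦ hp.not_isUnit (hz.2.isUnit_of_dvd' h (hiff.1 h))
  exact ⟨hfst, fun h ↦ hfst (hiff.2 h)⟩

theorem preimage_neg_snd_primitiveSolutions (c d n : R) :
    Prod.map id Neg.neg ⁻¹' primitiveSolutions c d n = primitiveSolutions c d n := by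
  ext z
  simp [primitiveSolutions, diagForm, IsCoprime.neg_right_iff]

theorem dvd_sub_or_dvd_add_of_dvd_diagForm {c d p : R} {r z : R × R} (hp : Prime p)
    (hpc : ¬ p ∣ c) (hr : p ∣ diagForm c d r) (hz : p ∣ diagForm c d z) :
    p ∣ r.2 * z.1 - r.1 * z.2 ∨ p ∣ r.2 * z.1 + r.1 * z.2 := by
  have heq : c * ((r.2 * z.1 - r.1 * z.2) * (r.2 * z.1 + r.1 * z.2)) =
      r.2 ^ 2 * diagForm c d z - z.2 ^ 2 * diagForm c d r := by
    simp only [diagForm]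
    ring
  have hprod : p ∣ c * ((r.2 * z.1 - r.1 * z.2) * (r.2 * z.1 + r.1 * z.2)) :=
    heq ▸ dvd_sub (hz.mul_left _) (hr.mul_left _)
  exact hp.dvd_or_dvd ((hp.dvd_or_dvd hprod).resolve_left hpc)

theorem not_dvd_sub_and_dvd_add {p : R} {r z : R × R} (hp : Prime p) (hp2 : ¬ p ∣ 2)
    (hr : ¬ p ∣ r.2) (hz : ¬ p ∣ z.1) :
    ¬ (p ∣ r.2 * z.1 - r.1 * z.2 ∧ p ∣ r.2 * z.1 + r.1 * z.2) := by
  rintro ⟨hsub, hadd⟩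
  have hsum : r.2 * z.1 - r.1 * z.2 + (r.2 * z.1 + r.1 * z.2) = 2 * (r.2 * z.1) := by ring
  have htwo : p ∣ 2 * (r.2 * z.1) := hsum ▸ dvd_add hsub hadd
  exact (hp.dvd_or_dvd ((hp.dvd_or_dvd htwo).resolve_left hp2)).elim hr hz

theorem encard_primitiveSolutions_eq_two_mul_encard_sep {c d n n' p : R} {r : R × R}
    (hp : Prime p) (hp2 : ¬ p ∣ 2) (hpc : ¬ p ∣ c) (hpd : ¬ p ∣ d) (hpn : p ∣ n) (hpn' : p ∣ n')
    (hr : r ∈ primitiveSolutions c d n') :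
    (primitiveSolutions c d n).encard =
      2 * {z ∈ primitiveSolutions c d n | p ∣ (composeSelf c d r z).2}.encard := by
  set U := primitiveSolutions c d n
  set U₁ := {z ∈ U | p ∣ (composeSelf c d r z).2}
  let conj : R × R → R × R := Prod.map id Neg.neg
  have mem_conj {z : R × R} : z ∈ conj ⁻¹' U₁ ↔ z ∈ U ∧ p ∣ r.2 * z.1 + r.1 * z.2 := by
    have hz : conj z ∈ U ↔ z ∈ U := Set.ext_iff.1 (preimage_neg_snd_primitiveSolutions c d n) z
    simp [U₁, hz, conj, composeSelf_apply]
  have hunion : U = U₁ ∪ conj ⁻¹' U₁ := by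
    ext z
    refine ⟨fun hz ↦ ?_, fun hz ↦ hz.elim And.left fun h ↦ (mem_conj.1 h).1⟩
    exact (dvd_sub_or_dvd_add_of_dvd_diagForm hp hpc (hpn'.trans hr.1.symm.dvd)
      (hpn.trans hz.1.symm.dvd)).imp (fun h ↦ ⟨hz, h⟩) fun h ↦ mem_conj.2 ⟨hz, h⟩
  have hdisj : Disjoint U₁ (conj ⁻¹' U₁) :=
    Set.disjoint_left.2 fun z ⟨hz, hsub⟩ hconj ↦ not_dvd_sub_and_dvd_add hp hp2
      (not_dvd_of_mem_primitiveSolutions hp hpc hpd hpn' hr).2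
      (not_dvd_of_mem_primitiveSolutions hp hpc hpd hpn hz).1 ⟨hsub, (mem_conj.1 hconj).2⟩
  have hconj : conj.Bijective := Function.bijective_id.prodMap neg_involutive.bijective
  rw [hunion, Set.encard_union_eq hdisj, Set.encard_preimage_of_bijective hconj, two_mul]

end CommRing

section IsDomain

variable {R : Type*} [CommRing R] [IsDomain R] {c d j p : R} {r w z : R × R}

theorem composeSelf_eq_smul_of_composePrincipal_eq_smul (hj : j ≠ 0)
    (hr : diagForm c d r = j * p) (h : composePrincipal c d r w = j • z) :
    composeSelf c d r z = p • w := by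
  rw [← smul_right_inj hj, ← map_smul, ← h, composeSelf_composePrincipal, hr, mul_smul]

theorem composePrincipal_eq_smul_of_composeSelf_eq_smul (hp : p ≠ 0)
    (hr : diagForm c d r = j * p) (h : composeSelf c d r z = p • w) :
    composePrincipal c d r w = j • z := by
  rw [← smul_right_inj hp, ← map_smul, ← h, composePrincipal_composeSelf, hr, mul_comm, mul_smul]

theorem composePrincipal_injective (hr : diagForm c d r ≠ 0) :
    Function.Injective (composePrincipal c d r) := fun w w' h ↦ by
  rw [← smul_right_inj hr, ← composeSelf_composePrincipal, h, composeSelf_composePrincipal]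

theorem diagForm_eq_iff_of_composePrincipal_eq_smul (hj : j ≠ 0) (hp : p ≠ 0)
    (hr : diagForm c d r = j * p) (h : composePrincipal c d r w = j • z) {m : R} :
    diagForm c d z = p * m ↔ diagForm 1 (c * d) w = j * m := by
  have hnorm : j * diagForm c d z = p * diagForm 1 (c * d) w := by
    apply mul_left_cancel₀ hj
    rw [← mul_assoc, ← sq, ← diagForm_smul, ← h, diagForm_composePrincipal, hr, mul_assoc]
  constructor <;> intro hm
  · apply mul_left_cancel₀ hp
    rw [← hnorm, hm, mul_left_comm]
  · apply mul_left_cancel₀ hj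
    rw [hnorm, hm, mul_left_comm]

end IsDomain

section PrincipalIdealRing

variable {R : Type*} [CommRing R] [IsDomain R] [IsPrincipalIdealRing R]
  {c d j m p : R} {r w z : R × R}

theorem isCoprime_of_composeSelf_eq_smul (hp : Prime p) (hpm : ¬ p ∣ m)
    (h : composeSelf c d r z = p • w) (hz : diagForm c d z = p * m) (hw : IsCoprime w.1 w.2) :
    IsCoprime z.1 z.2 := by
  have not_dvd_both : ¬ (p ∣ z.1 ∧ p ∣ z.2) := by
    rintro ⟨⟨s, hs⟩, ⟨t, ht⟩⟩
    refine hpm ⟨diagForm c d (s, t), mul_left_cancel₀ hp.ne_zero ?_⟩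
    rw [← hz, diagForm, diagForm, hs, ht]
    ring
  refine isCoprime_of_prime_dvd (fun h0 ↦ not_dvd_both (by simp [h0])) fun q hq h₁ h₂ ↦ ?_
  have hdvd := dvd_composeSelf (c := c) (d := d) (r := r) h₁ h₂
  rw [h] at hdvd
  have hpq : p ∣ q :=
    (hq.associated_of_dvd hp (dvd_of_isCoprime_of_dvd_smul hw hdvd.1 hdvd.2)).symm.dvd
  exact not_dvd_both ⟨hpq.trans h₁, hpq.trans h₂⟩

theorem isCoprime_of_composePrincipal_eq_smul {k : ℕ} (hj0 : j ≠ 0) (hjc : j ∣ c ^ k)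
    (hcop : IsCoprime c (diagForm c d z)) (hr : r ∈ primitiveSolutions c d (j * p))
    (h : composePrincipal c d r w = j • z) (hz : IsCoprime z.1 z.2) : IsCoprime w.1 w.2 := by
  have hw : ¬ (w.1 = 0 ∧ w.2 = 0) := fun h0 ↦ by
    have hz0 : z = 0 := by
      rw [show w = 0 from Prod.ext h0.1 h0.2, map_zero] at h
      exact (smul_eq_zero.1 h.symm).resolve_left hj0
    exact not_isUnit_zero (isCoprime_zero_left.1 (by simpa [hz0] using hz))
  refine isCoprime_of_prime_dvd hw fun q hq h₁ h₂ ↦ ?_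
  have hqj : q ∣ j := by
    have hdvd := dvd_composePrincipal (c := c) (d := d) (r := r) h₁ h₂
    rw [h] at hdvd
    exact dvd_of_isCoprime_of_dvd_smul hz hdvd.1 hdvd.2
  have hqc : q ∣ c := hq.dvd_of_dvd_pow (hqj.trans hjc)
  have hqdv : ¬ q ∣ d * z.2 ^ 2 := fun hdvd ↦
    hq.not_isUnit (hcop.isUnit_of_dvd' hqc (dvd_add (hqc.mul_right _) hdvd))
  have hqd : ¬ q ∣ d := fun hd ↦ hqdv (hd.mul_right _)
  have hqv : ¬ q ∣ z.2 := fun hv ↦ hqdv ((hv.pow two_ne_zero).mul_left _)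
  have hqy : q ∣ r.2 := by
    have hsum : q ∣ c * r.1 ^ 2 + d * r.2 ^ 2 := (hqj.mul_right p).trans hr.1.symm.dvd
    have hdy := (dvd_add_right (hqc.mul_right (r.1 ^ 2))).1 hsum
    exact hq.dvd_of_dvd_pow ((hq.dvd_or_dvd hdy).resolve_left hqd)
  have hqx : q ∣ r.1 := by
    have h' := composeSelf_eq_smul_of_composePrincipal_eq_smul hj0 hr.1 h
    have hsub : q ∣ r.2 * z.1 - r.1 * z.2 :=
      (h₂.mul_left p).trans (congrArg Prod.snd h').symm.dvd
    have hxv : q ∣ r.1 * z.2 := (dvd_sub_right (hqy.mul_right z.1)).1 hsub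
    exact (hq.dvd_or_dvd hxv).resolve_right hqv
  exact hq.not_isUnit (hr.2.isUnit_of_dvd' hqx hqy)

theorem composePrincipal_image_primitiveSolutions {k : ℕ} (hp : Prime p) (hpm : ¬ p ∣ m)
    (hj0 : j ≠ 0) (hjc : j ∣ c ^ k) (hcop : IsCoprime c (p * m))
    (hr : r ∈ primitiveSolutions c d (j * p))
    (hdvd : ∀ w ∈ primitiveSolutions 1 (c * d) (j * m), ∃ z, composePrincipal c d r w = j • z) :
    composePrincipal c d r '' primitiveSolutions 1 (c * d) (j * m) =
      (j • ·) '' {z ∈ primitiveSolutions c d (p * m) | p ∣ (composeSelf c d r z).2} := by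
  ext v
  constructor
  · rintro ⟨w, hw, rfl⟩
    obtain ⟨z, hzw⟩ := hdvd w hw
    have hwz := composeSelf_eq_smul_of_composePrincipal_eq_smul hj0 hr.1 hzw
    have hz := (diagForm_eq_iff_of_composePrincipal_eq_smul hj0 hp.ne_zero hr.1 hzw).2 hw.1
    exact ⟨z, ⟨⟨hz, isCoprime_of_composeSelf_eq_smul hp hpm hwz hz hw.2⟩, w.2,
      congrArg Prod.snd hwz⟩, hzw.symm⟩
  · rintro ⟨z, ⟨hz, hsnd⟩, rfl⟩
    have hfst : p ∣ (composeSelf c d r z).1 := by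
      have hnorm := diagForm_composeSelf c d r z
      rw [hr.1, diagForm, one_mul] at hnorm
      have hsum : p ∣ (composeSelf c d r z).1 ^ 2 + c * d * (composeSelf c d r z).2 ^ 2 :=
        hnorm ▸ (dvd_mul_left p j).mul_right _
      exact hp.dvd_of_dvd_pow ((dvd_add_left ((hsnd.pow two_ne_zero).mul_left _)).1 hsum)
    obtain ⟨a, ha⟩ := hfst
    obtain ⟨b, hb⟩ := hsnd
    have hwz : composeSelf c d r z = p • (a, b) := Prod.ext ha hb
    have hzw := composePrincipal_eq_smul_of_composeSelf_eq_smul hp.ne_zero hr.1 hwz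
    have hw := (diagForm_eq_iff_of_composePrincipal_eq_smul hj0 hp.ne_zero hr.1 hzw).1 hz.1
    exact ⟨(a, b), ⟨hw, isCoprime_of_composePrincipal_eq_smul hj0 hjc (hz.1.symm ▸ hcop) hr hzw
      hz.2⟩, hzw⟩

theorem encard_primitiveSolutions_mul_eq_two_mul {k : ℕ} (hp : Prime p) (hp2 : ¬ p ∣ 2)
    (hpd : ¬ p ∣ d) (hpm : ¬ p ∣ m) (hjc : j ∣ c ^ k) (hcop : IsCoprime c (p * m))
    (hr : r ∈ primitiveSolutions c d (j * p))
    (hdvd : ∀ w ∈ primitiveSolutions 1 (c * d) (j * m), ∃ z, composePrincipal c d r w = j • z) :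
    (primitiveSolutions c d (p * m)).encard =
      2 * (primitiveSolutions 1 (c * d) (j * m)).encard := by
  have hpc : ¬ p ∣ c := fun h ↦ hp.not_isUnit (hcop.isUnit_of_dvd' h (dvd_mul_right p m))
  have hj0 : j ≠ 0 := by
    rintro rfl
    exact hpc (hp.dvd_of_dvd_pow (zero_dvd_iff.1 hjc ▸ dvd_zero p))
  have hr0 : diagForm c d r ≠ 0 := hr.1.symm ▸ mul_ne_zero hj0 hp.ne_zero
  rw [encard_primitiveSolutions_eq_two_mul_encard_sep hp hp2 hpc hpd (dvd_mul_right p m)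
      (dvd_mul_left p j) hr,
    ← (smul_right_injective (R × R) hj0).encard_image,
    ← composePrincipal_image_primitiveSolutions hp hpm hj0 hjc hcop hr hdvd,
    (composePrincipal_injective hr0).encard_image]

end PrincipalIdealRing

section TwoAdic

theorem even_of_sq_eq_two_mul {x k : ℤ} (h : x ^ 2 = 2 * k) : Even k := by
  have hx : Even x := (Int.even_pow.1 (h ▸ even_two_mul k)).1
  obtain ⟨t, rfl⟩ := hx
  exact ⟨t ^ 2, by linarith⟩

theorem even_of_sq_eq_eight_mul {x k : ℤ} (h : x ^ 2 = 8 * k) : Even k := by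
  have hx : Even x := (Int.even_pow.1 (h ▸ (by decide : Even (8 : ℤ)).mul_right k)).1
  obtain ⟨t, rfl⟩ := hx
  exact even_of_sq_eq_two_mul (x := t) (by linarith)

theorem dvd_of_eight_mul_sq_add_eq {d j n x y : ℤ} (hd : Odd d) (hj : j = 4 ∨ j = 8)
    (hn : n ≡ d [ZMOD 8]) (hy : j ∣ y) (h : 8 * x ^ 2 + d * y ^ 2 = j ^ 2 * n) : j ∣ x := by
  obtain ⟨t, rfl⟩ := hy
  have hsq : 8 * x ^ 2 = j ^ 2 * (n - d * t ^ 2) := by linear_combination h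
  have heven : Even (n - d * t ^ 2) := by
    rcases hj with rfl | rfl
    · exact even_of_sq_eq_two_mul (x := x) (by linarith)
    · exact even_of_sq_eq_eight_mul (x := x) (by linarith)
  have hnd : (8 : ℤ) ∣ n - d := hn.symm.dvd
  have ht : Odd t := by
    have hn_odd : Odd n := by
      have hnd_even : Even (n - d) := even_iff_two_dvd.2 (dvd_trans (by norm_num) hnd)
      simpa only [sub_add_cancel] using hnd_even.add_odd hd
    have hdt : Odd (d * t ^ 2) := by
      simpa only [sub_sub_cancel] using hn_odd.sub_even heven
    exact (Int.odd_pow' two_ne_zero).1 (Int.odd_mul.1 hdt).2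
  have h_eight : (8 : ℤ) ∣ n - d * t ^ 2 := by
    have hsub : n - d * t ^ 2 = n - d - d * (t ^ 2 - 1) := by ring
    exact hsub ▸ dvd_sub hnd ((Int.eight_dvd_sq_sub_one_of_odd ht).mul_left d)
  obtain ⟨s, hs⟩ := h_eight
  exact (Int.pow_dvd_pow_iff two_ne_zero).1 ⟨s, by rw [hs] at hsq; linarith⟩

theorem exists_composePrincipal_eq_smul {d j m p : ℤ} {r w : ℤ × ℤ} (hd : Odd d)
    (hj : j ∈ ({1, 4, 8} : Set ℤ)) (hmod : p * m ≡ d [ZMOD 8]) (hr : diagForm 8 d r = j * p)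
    (hw : diagForm 1 (8 * d) w = j * m) : ∃ z, composePrincipal 8 d r w = j • z := by
  obtain rfl | hj : j = 1 ∨ j = 4 ∨ j = 8 := hj
  · exact ⟨_, (one_smul ℤ _).symm⟩
  have hj8 : j ∣ 8 := by rcases hj with rfl | rfl <;> norm_num
  have hjd : IsCoprime j d := by
    refine IsCoprime.of_isCoprime_of_dvd_left ?_ hj8
    simpa using (Int.isCoprime_two_left.2 hd).pow_left (m := 3)
  have hy : j ∣ r.2 ^ 2 := hjd.dvd_of_dvd_mul_left <|
    (dvd_add_right (hj8.mul_right (r.1 ^ 2))).1 (hr ▸ dvd_mul_right j p)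
  have ha : j ∣ w.1 ^ 2 := by
    have hone := (dvd_add_left ((hj8.mul_right d).mul_right (w.2 ^ 2))).1 (hw ▸ dvd_mul_right j m)
    rwa [one_mul] at hone
  have hya : j ∣ r.2 * w.1 := (Int.pow_dvd_pow_iff two_ne_zero).1 <| by
    rw [sq, mul_pow]
    exact mul_dvd_mul hy ha
  have hsnd : j ∣ (composePrincipal 8 d r w).2 :=
    dvd_sub hya ((hj8.mul_right r.1).mul_right w.2)
  have hnorm := diagForm_composePrincipal 8 d r w
  rw [hr, hw] at hnorm
  have hfst : j ∣ (composePrincipal 8 d r w).1 :=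
    dvd_of_eight_mul_sq_add_eq hd hj hmod hsnd (hnorm.trans (by ring))
  obtain ⟨u, hu⟩ := hfst
  obtain ⟨v, hv⟩ := hsnd
  exact ⟨(u, v), Prod.ext hu hv⟩

end TwoAdic

/-- Counted by `Set.encard`, because both sets can be infinite when `d < 0`. -/
theorem stmt_13_general {d j m p : ℤ} (hd : Odd d) (hp : Prime p) (hpd : ¬ p ∣ d)
    (hpm : ¬ p ∣ m) (hj : j ∈ ({1, 4, 8} : Set ℤ)) (hmod : p * m ≡ d [ZMOD 8])
    (hsol : (primitiveSolutions 8 d (j * p)).Nonempty) :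
    (primitiveSolutions 8 d (p * m)).encard =
      2 * (primitiveSolutions 1 (8 * d) (j * m)).encard := by
  obtain ⟨r, hr⟩ := hsol
  have hodd : Odd (p * m) := by
    rw [Int.odd_iff] at hd ⊢
    have hrem : p * m % 8 = d % 8 := hmod
    omega
  have hcop : IsCoprime (8 : ℤ) (p * m) := by
    simpa using (Int.isCoprime_two_left.2 hodd).pow_left (m := 3)
  have hp2 : ¬ p ∣ 2 := fun h ↦ hp.not_isUnit <|
    (Int.isCoprime_two_left.2 hodd).isUnit_of_dvd' h (dvd_mul_right p m)
  have hj8 : j ∣ 8 ^ 1 := by rcases hj with rfl | rfl | rfl <;> norm_num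
  exact encard_primitiveSolutions_mul_eq_two_mul hp hp2 hpd hpm hj8 hcop hr
    fun w hw ↦ exists_composePrincipal_eq_smul hd hj hmod hr.1 hw.1

theorem stmt_13 (p : ℕ) (hp : p.Prime) (hodd : Odd p)
    (j : ℤ) (hj : j ∈ ({1, 4, 8} : Set ℤ))
    (hsol : ∃ x y : ℤ, 8 * x ^ 2 + 27 * y ^ 2 = j * p ∧ Int.gcd x y = 1)
    (m : ℕ) (hm : 0 < m) (hpm : ¬ p ∣ m) (hmod : (p * m) % 24 = 11) :
    {q : ℤ × ℤ | 8 * q.1 ^ 2 + 27 * q.2 ^ 2 = (p : ℤ) * m ∧ Int.gcd q.1 q.2 = 1}.ncard =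
      2 * {q : ℤ × ℤ | q.1 ^ 2 + 216 * q.2 ^ 2 = j * m ∧ Int.gcd q.1 q.2 = 1}.ncard := by
  have hp27 : ¬ p ∣ 27 := fun h ↦ by
    have hp3 : p = 3 :=
      (Nat.prime_dvd_prime_iff_eq hp Nat.prime_three).1 (hp.dvd_of_dvd_pow (n := 3) h)
    subst hp3
    omega
  have hmod8 : (p : ℤ) * m ≡ 27 [ZMOD 8] := by
    have hrem : (p : ℤ) * m % 24 = 11 := mod_cast hmod
    change (p : ℤ) * m % 8 = 27 % 8
    omega
  have hcard := stmt_13_general (by decide) (Nat.prime_iff_prime_int.1 hp) (mod_cast hp27)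
    (mod_cast hpm) hj hmod8
    (by simpa [Set.Nonempty, primitiveSolutions, diagForm, Int.isCoprime_iff_gcd_eq_one] using hsol)
  simpa [primitiveSolutions, diagForm, Int.isCoprime_iff_gcd_eq_one, Set.ncard] using
    congrArg ENat.toNat hcard
end

section
/- Let p be an odd prime such that the Diophantine equation 8x^2 + 27y^2 = jp has a primitive solution for some j ∈ {1, 4, 8}. Let m be an integer with m > 1, p ∤ m, and pm ≡ 11 (mod 24). Then the cardinality of the set {(u, v) ∈ ℤ² : 8u^2 + 27v^2 = pm and gcd(u, v) = 1} is divisible by 8. -/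
/-!
Let `Q (u, v) = A u ^ 2 + B v ^ 2`, let `p ∤ 2 A B` be a prime, and suppose
`a ^ 2 + A B b ^ 2 = p ^ 2` with `p ∤ b`. For `p ∤ m`, a primitive representation `(u, v)` of `p m`
by `Q` satisfies exactly one of `p ∣ a u + B b v` and `p ∣ a u - B b v`, and `(u, v) ↦ (-u, v)`
exchanges the two cases. On the representations of the first kind, the rational reflection
`ρ (u, v) = (-(a u + B b v), a v - A b u) / p` is an integral isometry of `Q`, so the Klein
four-group `{±1, ±ρ}` acts on them. If `m` has a prime factor `q ∤ 2 A B`, the action is free: if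
`ρ (u, v) = (± u, ± v)`, the identity `ρ(u, v)₁ v + u ρ(u, v)₂ = -b m` would make `q` divide
`2 u v`. Hence the number of representations is divisible by `2 * 4`.

For `8 u ^ 2 + 27 v ^ 2`, a solution of `8 x ^ 2 + 27 y ^ 2 = j p` gives
`a = (8 x ^ 2 - 27 y ^ 2) / j` and `b = 2 x y / j`.
-/

open Set

lemma encard_eq_two_mul_encard_sep {α : Type*} {S : Set α} {σ : α → α} (P : α → Prop)
    (hmaps : MapsTo σ S S) (hinv : LeftInvOn σ σ S) (hflip : ∀ s ∈ S, P (σ s) ↔ ¬ P s) :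
    S.encard = 2 * {s ∈ S | P s}.encard := by
  have himage : σ '' {s ∈ S | P s} = S \ {s | P s} := by
    ext t
    constructor
    · rintro ⟨s, ⟨hs, hPs⟩, rfl⟩
      exact ⟨hmaps hs, fun hP ↦ (hflip s hs).1 hP hPs⟩
    · rintro ⟨ht, hPt⟩
      exact ⟨σ t, ⟨hmaps ht, (hflip t ht).2 hPt⟩, hinv ht⟩
  have hinj : InjOn σ {s ∈ S | P s} := hinv.injOn.mono (sep_subset S P)
  rw [← encard_sdiff_add_encard_inter S {s | P s}, ← himage, hinj.encard_image, two_mul]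
  rfl

lemma four_dvd_encard_of_involution {α R : Type*} [InvolutiveNeg α] [AddCommGroup R] [LinearOrder R]
    [IsOrderedAddMonoid R] {S : Set α} {ρ : α → α} {f : α → R} (hf : ∀ s, f (-s) = -f s)
    (hneg_mem : MapsTo Neg.neg S S) (hmaps : MapsTo ρ S S) (hinv : LeftInvOn ρ ρ S)
    (hneg : ∀ s ∈ S, ρ (-s) = -ρ s) (hfree : ∀ s ∈ S, f (ρ s) ≠ f s ∧ f (ρ s) ≠ -f s) :
    4 ∣ S.encard := by
  have hneg_inv : ∀ s ∈ S, ρ (-ρ s) = -s := fun s hs ↦ by rw [hneg _ (hmaps hs), hinv hs]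
  have hhalf : S.encard = 2 * {s ∈ S | f (ρ s) < f s}.encard :=
    encard_eq_two_mul_encard_sep _ hmaps hinv fun s hs ↦ by
      rw [hinv hs, not_lt, (hfree s hs).1.symm.le_iff_lt]
  have hquarter : {s ∈ S | f (ρ s) < f s}.encard =
      2 * {s ∈ {s ∈ S | f (ρ s) < f s} | -f (ρ s) < f s}.encard := by
    refine encard_eq_two_mul_encard_sep (σ := fun s ↦ -ρ s) _ ?_ ?_ ?_
    · rintro s ⟨hs, hlt⟩
      refine ⟨hneg_mem (hmaps hs), ?_⟩
      rw [hneg_inv s hs, hf, hf]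
      exact neg_lt_neg hlt
    · rintro s ⟨hs, -⟩
      simp only [hneg_inv s hs, neg_neg]
    · rintro s ⟨hs, -⟩
      have hne : f s ≠ -f (ρ s) := fun h ↦ (hfree s hs).2 (by rw [h, neg_neg])
      rw [hneg_inv s hs, hf, hf, neg_neg, not_lt, hne.le_iff_lt]
  rw [hhalf, hquarter, ← mul_assoc, show (2 * 2 : ℕ∞) = 4 by norm_num]
  exact dvd_mul_right 4 _

/-- The primitive representations of `n` by the diagonal form `A u ^ 2 + B v ^ 2`. -/
def primitiveReps (A B n : ℤ) : Set (ℤ × ℤ) :=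
  {s | A * s.1 ^ 2 + B * s.2 ^ 2 = n ∧ Int.gcd s.1 s.2 = 1}

section PrimitiveReps

variable {A B n q : ℤ} {s : ℤ × ℤ}

lemma swap_mem_primitiveReps (hs : s ∈ primitiveReps A B n) : s.swap ∈ primitiveReps B A n :=
  ⟨(add_comm _ _).trans hs.1, (Int.gcd_comm _ _).trans hs.2⟩

lemma neg_fst_mem_primitiveReps (hs : s ∈ primitiveReps A B n) :
    (-s.1, s.2) ∈ primitiveReps A B n := by
  simpa [primitiveReps] using hs

lemma neg_mem_primitiveReps (hs : s ∈ primitiveReps A B n) : -s ∈ primitiveReps A B n := by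
  simpa [primitiveReps] using hs

lemma not_dvd_fst_of_mem_primitiveReps (hq : Prime q) (hqB : ¬ q ∣ B) (hqn : q ∣ n)
    (hs : s ∈ primitiveReps A B n) : ¬ q ∣ s.1 := by
  obtain ⟨hform, hgcd⟩ := hs
  intro hfst
  have hsnd_sq : q ∣ B * s.2 ^ 2 :=
    (Int.dvd_add_right ((hfst.pow two_ne_zero).mul_left A)).1 (hform ▸ hqn)
  have hsnd : q ∣ s.2 := hq.dvd_of_dvd_pow ((hq.dvd_or_dvd hsnd_sq).resolve_left hqB)
  exact hq.not_isUnit ((Int.isCoprime_iff_gcd_eq_one.2 hgcd).isUnit_of_dvd' hfst hsnd)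

lemma not_dvd_snd_of_mem_primitiveReps (hq : Prime q) (hqA : ¬ q ∣ A) (hqn : q ∣ n)
    (hs : s ∈ primitiveReps A B n) : ¬ q ∣ s.2 :=
  not_dvd_fst_of_mem_primitiveReps hq hqA hqn (swap_mem_primitiveReps hs)

end PrimitiveReps

/-- The primitive representations of `p * m` on which `formReflection A B a b p` is integral. -/
def reflectableReps (A B a b p m : ℤ) : Set (ℤ × ℤ) :=
  {s ∈ primitiveReps A B (p * m) | p ∣ a * s.1 + B * b * s.2}

/-- The reflection of `ℚ²` preserving `A u ^ 2 + B v ^ 2` attached to a solution of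
`a ^ 2 + A * B * b ^ 2 = p ^ 2`. The divisions are exact on `reflectableReps A B a b p m`. -/
def formReflection (A B a b p : ℤ) (s : ℤ × ℤ) : ℤ × ℤ :=
  (-(a * s.1 + B * b * s.2) / p, (a * s.2 - A * b * s.1) / p)

section Reflection

variable {A B a b p m q : ℤ} {s t : ℤ × ℤ}

lemma formReflection_eq (hp : p ≠ 0) (hfst : -(a * s.1 + B * b * s.2) = p * t.1)
    (hsnd : a * s.2 - A * b * s.1 = p * t.2) : formReflection A B a b p s = t :=
  Prod.ext (Int.ediv_eq_of_eq_mul_right hp hfst) (Int.ediv_eq_of_eq_mul_right hp hsnd)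

lemma neg_mem_reflectableReps (hs : s ∈ reflectableReps A B a b p m) :
    -s ∈ reflectableReps A B a b p m := by
  refine ⟨neg_mem_primitiveReps hs.1, ?_⟩
  have hneg : a * (-s).1 + B * b * (-s).2 = -(a * s.1 + B * b * s.2) := by
    rw [Prod.fst_neg, Prod.snd_neg]; ring
  exact hneg ▸ hs.2.neg_right

lemma mul_formReflection_fst (hs : s ∈ reflectableReps A B a b p m) :
    p * (formReflection A B a b p s).1 = -(a * s.1 + B * b * s.2) :=
  Int.mul_ediv_cancel' hs.2.neg_right

lemma mul_formReflection_snd (hp : Prime p) (hpB : ¬ p ∣ B) (hpb : ¬ p ∣ b)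
    (hab : a ^ 2 + A * B * b ^ 2 = p ^ 2) (hs : s ∈ reflectableReps A B a b p m) :
    p * (formReflection A B a b p s).2 = a * s.2 - A * b * s.1 := by
  have hBb : ¬ p ∣ B * b := hp.not_dvd_mul hpB hpb
  obtain ⟨k, hk⟩ := hs.2
  have hdvd : p ∣ B * b * (a * s.2 - A * b * s.1) :=
    ⟨a * k - p * s.1, by linear_combination a * hk - s.1 * hab⟩
  exact Int.mul_ediv_cancel' ((hp.dvd_or_dvd hdvd).resolve_left hBb)

lemma mul_fst_eq_of_reflection (hp : p ≠ 0) (hab : a ^ 2 + A * B * b ^ 2 = p ^ 2)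
    (hfst : p * t.1 = -(a * s.1 + B * b * s.2)) (hsnd : p * t.2 = a * s.2 - A * b * s.1) :
    p * s.1 = -(a * t.1 + B * b * t.2) :=
  mul_left_cancel₀ hp (by linear_combination -s.1 * hab + a * hfst + B * b * hsnd)

lemma mul_snd_eq_of_reflection (hp : p ≠ 0) (hab : a ^ 2 + A * B * b ^ 2 = p ^ 2)
    (hfst : p * t.1 = -(a * s.1 + B * b * s.2)) (hsnd : p * t.2 = a * s.2 - A * b * s.1) :
    p * s.2 = a * t.2 - A * b * t.1 :=
  mul_left_cancel₀ hp (by linear_combination -s.2 * hab - a * hsnd + A * b * hfst)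

lemma gcd_eq_one_of_dvd_prime (hp : Prime p) (hpm : ¬ p ∣ m)
    (hform : A * t.1 ^ 2 + B * t.2 ^ 2 = p * m) (hgcd : (Int.gcd t.1 t.2 : ℤ) ∣ p) :
    Int.gcd t.1 t.2 = 1 := by
  have hdvd : Int.gcd t.1 t.2 ∣ p.natAbs := Int.natCast_dvd.1 hgcd
  refine ((Nat.dvd_prime (Int.prime_iff_natAbs_prime.1 hp)).1 hdvd).resolve_right fun heq ↦ hpm ?_
  have hdvd_gcd : p ∣ Int.gcd t.1 t.2 := by rw [heq]; exact Int.dvd_natAbs_self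
  obtain ⟨x, hx⟩ := hdvd_gcd.trans (Int.gcd_dvd_left t.1 t.2)
  obtain ⟨y, hy⟩ := hdvd_gcd.trans (Int.gcd_dvd_right t.1 t.2)
  refine ⟨A * x ^ 2 + B * y ^ 2, mul_left_cancel₀ hp.ne_zero ?_⟩
  rw [← hform, hx, hy]
  ring

lemma formReflection_mem (hp : Prime p) (hpB : ¬ p ∣ B) (hpb : ¬ p ∣ b) (hpm : ¬ p ∣ m)
    (hab : a ^ 2 + A * B * b ^ 2 = p ^ 2) (hs : s ∈ reflectableReps A B a b p m) :
    formReflection A B a b p s ∈ reflectableReps A B a b p m := by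
  have hfst := mul_formReflection_fst hs
  have hsnd := mul_formReflection_snd hp hpB hpb hab hs
  set t := formReflection A B a b p s
  have hfst' := mul_fst_eq_of_reflection hp.ne_zero hab hfst hsnd
  have hsnd' := mul_snd_eq_of_reflection hp.ne_zero hab hfst hsnd
  have hform : A * t.1 ^ 2 + B * t.2 ^ 2 = p * m := by
    apply mul_left_cancel₀ (pow_ne_zero 2 hp.ne_zero)
    calc p ^ 2 * (A * t.1 ^ 2 + B * t.2 ^ 2)
        = A * (p * t.1) ^ 2 + B * (p * t.2) ^ 2 := by ring
      _ = (a ^ 2 + A * B * b ^ 2) * (A * s.1 ^ 2 + B * s.2 ^ 2) := by rw [hfst, hsnd]; ring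
      _ = p ^ 2 * (p * m) := by rw [hab, hs.1.1]
  have hgcd : (Int.gcd t.1 t.2 : ℤ) ∣ p := by
    have hg₁ := Int.gcd_dvd_left t.1 t.2
    have hg₂ := Int.gcd_dvd_right t.1 t.2
    have hdvd₁ : (Int.gcd t.1 t.2 : ℤ) ∣ p * s.1 :=
      hfst' ▸ ((hg₁.mul_left a).add (hg₂.mul_left (B * b))).neg_right
    have hdvd₂ : (Int.gcd t.1 t.2 : ℤ) ∣ p * s.2 :=
      hsnd' ▸ (hg₂.mul_left a).sub (hg₁.mul_left (A * b))
    simpa [Int.gcd_mul_left, hs.1.2] using Int.dvd_coe_gcd hdvd₁ hdvd₂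
  exact ⟨⟨hform, gcd_eq_one_of_dvd_prime hp hpm hform hgcd⟩,
    dvd_neg.1 (Dvd.intro s.1 hfst')⟩

lemma formReflection_formReflection (hp : Prime p) (hpB : ¬ p ∣ B) (hpb : ¬ p ∣ b)
    (hab : a ^ 2 + A * B * b ^ 2 = p ^ 2) (hs : s ∈ reflectableReps A B a b p m) :
    formReflection A B a b p (formReflection A B a b p s) = s := by
  have hfst := mul_formReflection_fst hs
  have hsnd := mul_formReflection_snd hp hpB hpb hab hs
  exact formReflection_eq hp.ne_zero (mul_fst_eq_of_reflection hp.ne_zero hab hfst hsnd).symm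
    (mul_snd_eq_of_reflection hp.ne_zero hab hfst hsnd).symm

lemma formReflection_neg (hp : Prime p) (hpB : ¬ p ∣ B) (hpb : ¬ p ∣ b)
    (hab : a ^ 2 + A * B * b ^ 2 = p ^ 2) (hs : s ∈ reflectableReps A B a b p m) :
    formReflection A B a b p (-s) = -formReflection A B a b p s := by
  have hfst := mul_formReflection_fst hs
  have hsnd := mul_formReflection_snd hp hpB hpb hab hs
  apply formReflection_eq hp.ne_zero <;> simp only [Prod.fst_neg, Prod.snd_neg]
  · linear_combination hfst
  · linear_combination hsnd

lemma formReflection_fst_sq_ne (hp : Prime p) (hpB : ¬ p ∣ B) (hpb : ¬ p ∣ b) (hpm : ¬ p ∣ m)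
    (hab : a ^ 2 + A * B * b ^ 2 = p ^ 2) (hq : Prime q) (hq2 : ¬ q ∣ 2) (hqA : ¬ q ∣ A)
    (hqB : ¬ q ∣ B) (hqm : q ∣ m) (hs : s ∈ reflectableReps A B a b p m) :
    (formReflection A B a b p s).1 ^ 2 ≠ s.1 ^ 2 := by
  have hfst := mul_formReflection_fst hs
  have hsnd := mul_formReflection_snd hp hpB hpb hab hs
  have hmem := formReflection_mem hp hpB hpb hpm hab hs
  set t := formReflection A B a b p s
  intro hsq₁
  have hB : B ≠ 0 := by rintro rfl; exact hpB (dvd_zero p)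
  have hsq₂ : t.2 ^ 2 = s.2 ^ 2 :=
    mul_left_cancel₀ hB (by linear_combination hmem.1.1 - hs.1.1 - A * hsq₁)
  have hcross : t.1 * s.2 + s.1 * t.2 = -(b * m) :=
    mul_left_cancel₀ hp.ne_zero (by linear_combination s.2 * hfst + s.1 * hsnd - b * hs.1.1)
  have hbm : b * m ≠ 0 := fun h ↦ hp.not_dvd_mul hpb hpm (h ▸ dvd_zero p)
  have h_not_dvd : ¬ q ∣ 2 * (s.1 * s.2) :=
    hq.not_dvd_mul hq2 (hq.not_dvd_mul
      (not_dvd_fst_of_mem_primitiveReps hq hqB (hqm.mul_left p) hs.1)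
      (not_dvd_snd_of_mem_primitiveReps hq hqA (hqm.mul_left p) hs.1))
  obtain ⟨k, rfl⟩ := hqm
  rcases sq_eq_sq_iff_eq_or_eq_neg.1 hsq₁ with h₁ | h₁ <;>
    rcases sq_eq_sq_iff_eq_or_eq_neg.1 hsq₂ with h₂ | h₂ <;> rw [h₁, h₂] at hcross
  · exact h_not_dvd ⟨-(b * k), by linear_combination hcross⟩
  · exact hbm (by linear_combination hcross)
  · exact hbm (by linear_combination hcross)
  · exact h_not_dvd ⟨b * k, by linear_combination -hcross⟩

lemma four_dvd_encard_reflectableReps (hp : Prime p) (hpB : ¬ p ∣ B) (hpb : ¬ p ∣ b)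
    (hpm : ¬ p ∣ m) (hab : a ^ 2 + A * B * b ^ 2 = p ^ 2) (hq : Prime q) (hq2 : ¬ q ∣ 2)
    (hqA : ¬ q ∣ A) (hqB : ¬ q ∣ B) (hqm : q ∣ m) :
    4 ∣ (reflectableReps A B a b p m).encard :=
  four_dvd_encard_of_involution (f := Prod.fst) Prod.fst_neg
    (fun _ ↦ neg_mem_reflectableReps)
    (fun _ ↦ formReflection_mem hp hpB hpb hpm hab)
    (fun _ ↦ formReflection_formReflection hp hpB hpb hab)
    (fun _ ↦ formReflection_neg hp hpB hpb hab)
    fun _ hs ↦ not_or.1 (sq_eq_sq_iff_eq_or_eq_neg.not.1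
      (formReflection_fst_sq_ne hp hpB hpb hpm hab hq hq2 hqA hqB hqm hs))

lemma not_dvd_of_sq_add_mul_sq_eq_sq (hp : Prime p) (hpA : ¬ p ∣ A) (hpB : ¬ p ∣ B)
    (hpb : ¬ p ∣ b) (hab : a ^ 2 + A * B * b ^ 2 = p ^ 2) : ¬ p ∣ a := by
  intro hpa
  have hdvd : p ∣ A * B * b ^ 2 :=
    (Int.dvd_add_right (hpa.pow two_ne_zero)).1 (hab ▸ dvd_pow_self p two_ne_zero)
  exact hp.not_dvd_mul (hp.not_dvd_mul hpA hpB) (fun h ↦ hpb (hp.dvd_of_dvd_pow h)) hdvd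

lemma dvd_neg_fst_iff_not_dvd (hp : Prime p) (hp2 : ¬ p ∣ 2) (hpA : ¬ p ∣ A) (hpB : ¬ p ∣ B)
    (hpb : ¬ p ∣ b) (hab : a ^ 2 + A * B * b ^ 2 = p ^ 2) (hs : s ∈ primitiveReps A B (p * m)) :
    p ∣ a * -s.1 + B * b * s.2 ↔ ¬ p ∣ a * s.1 + B * b * s.2 := by
  constructor
  · rintro ⟨k, hk⟩ ⟨l, hl⟩
    have hdvd : p ∣ 2 * (a * s.1) := ⟨l - k, by linear_combination hl - hk⟩
    exact hp.not_dvd_mul hp2 (hp.not_dvd_mul (not_dvd_of_sq_add_mul_sq_eq_sq hp hpA hpB hpb hab)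
      (not_dvd_fst_of_mem_primitiveReps hp hpB (dvd_mul_right p m) hs)) hdvd
  · intro hpos
    have hdvd : p ∣ (a * s.1 + B * b * s.2) * (a * -s.1 + B * b * s.2) :=
      ⟨B * b ^ 2 * m - p * s.1 ^ 2, by linear_combination B * b ^ 2 * hs.1 - s.1 ^ 2 * hab⟩
    exact (hp.dvd_or_dvd hdvd).resolve_left hpos

theorem eight_dvd_encard_primitiveReps (hp : Prime p) (hp2 : ¬ p ∣ 2) (hpA : ¬ p ∣ A)
    (hpB : ¬ p ∣ B) (hpb : ¬ p ∣ b) (hpm : ¬ p ∣ m) (hab : a ^ 2 + A * B * b ^ 2 = p ^ 2)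
    (hq : Prime q) (hq2 : ¬ q ∣ 2) (hqA : ¬ q ∣ A) (hqB : ¬ q ∣ B) (hqm : q ∣ m) :
    8 ∣ (primitiveReps A B (p * m)).encard := by
  have hhalf : (primitiveReps A B (p * m)).encard = 2 * (reflectableReps A B a b p m).encard :=
    encard_eq_two_mul_encard_sep (σ := fun s ↦ (-s.1, s.2)) _
      (fun _ ↦ neg_fst_mem_primitiveReps) (fun s _ ↦ by simp only [neg_neg])
      fun _ ↦ dvd_neg_fst_iff_not_dvd hp hp2 hpA hpB hpb hab
  rw [hhalf, show (8 : ℕ∞) = 2 * 4 by norm_num]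
  exact mul_dvd_mul_left 2 (four_dvd_encard_reflectableReps hp hpB hpb hpm hab hq hq2 hqA hqB hqm)

end Reflection

lemma exists_sq_add_mul_sq_eq_sq {A B j p x y : ℤ} (hj : j ≠ 0)
    (h : A * x ^ 2 + B * y ^ 2 = j * p) (hdvd : j ∣ 2 * (x * y)) :
    ∃ a b : ℤ, a ^ 2 + A * B * b ^ 2 = p ^ 2 ∧ 2 * (x * y) = j * b := by
  obtain ⟨b, hb⟩ := hdvd
  have hsq : (A * x ^ 2 - B * y ^ 2) ^ 2 = j ^ 2 * (p ^ 2 - A * B * b ^ 2) := by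
    linear_combination
      (A * x ^ 2 + B * y ^ 2 + j * p) * h - A * B * (2 * (x * y) + j * b) * hb
  obtain ⟨a, ha⟩ := (Int.pow_dvd_pow_iff two_ne_zero).1 (Dvd.intro _ hsq.symm)
  refine ⟨a, b, mul_left_cancel₀ (pow_ne_zero 2 hj) ?_, hb⟩
  rw [ha] at hsq
  linear_combination hsq

lemma dvd_two_mul_of_dvd_sq {j y : ℤ} (hj : j ∣ 8) (h : j ∣ y ^ 2) : j ∣ 2 * y := by
  have hmod : ∀ z : ZMod 8, ∃ c, c * z ^ 2 = 2 * z := by decide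
  obtain ⟨c, hc⟩ := hmod y
  obtain ⟨c, rfl⟩ := ZMod.intCast_surjective c
  have h8 : 8 ∣ 2 * y - c * y ^ 2 :=
    (ZMod.intCast_eq_intCast_iff_dvd_sub (c * y ^ 2) (2 * y) 8).1 (by exact_mod_cast hc)
  exact (dvd_sub_left (h.mul_left c)).1 (hj.trans h8)

lemma ne_three_of_eight_mul_sq_add_eq {j p x y : ℤ} (hj : j ∣ 8)
    (h : 8 * x ^ 2 + 27 * y ^ 2 = j * p) : p ≠ 3 := by
  rintro rfl
  obtain ⟨k, rfl⟩ : 3 ∣ x := Int.prime_three.dvd_of_dvd_pow (n := 2) (by lia)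
  have hj3 : 3 ∣ j := ⟨8 * k ^ 2 + 3 * y ^ 2, by linarith⟩
  exact absurd (hj3.trans hj) (by norm_num)

lemma not_dvd_of_not_dvd_six {p : ℤ} (hp : Prime p) (hp6 : ¬ p ∣ 6) :
    ¬ p ∣ 2 ∧ ¬ p ∣ 8 ∧ ¬ p ∣ 27 := by
  have hp2 : ¬ p ∣ 2 := fun h ↦ hp6 (h.mul_right 3)
  have hp3 : ¬ p ∣ 3 := fun h ↦ hp6 (h.mul_right 2)
  exact ⟨hp2, fun h ↦ hp2 (hp.dvd_of_dvd_pow (n := 3) h),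
    fun h ↦ hp3 (hp.dvd_of_dvd_pow (n := 3) h)⟩

lemma exists_sq_add_216_mul_sq_eq_sq {p : ℤ} (hp : Prime p) (hp6 : ¬ p ∣ 6) {j x y : ℤ}
    (hj : j ∣ 8) (hs : (x, y) ∈ primitiveReps 8 27 (j * p)) :
    ∃ a b : ℤ, a ^ 2 + 8 * 27 * b ^ 2 = p ^ 2 ∧ ¬ p ∣ b := by
  obtain ⟨hp2, hp8, hp27⟩ := not_dvd_of_not_dvd_six hp hp6
  have hpx : ¬ p ∣ x := not_dvd_fst_of_mem_primitiveReps hp hp27 (dvd_mul_left p j) hs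
  have hpy : ¬ p ∣ y := not_dvd_snd_of_mem_primitiveReps hp hp8 (dvd_mul_left p j) hs
  have hj0 : j ≠ 0 := ne_zero_of_dvd_ne_zero (by norm_num) hj
  have hj27 : IsCoprime j 27 :=
    IsCoprime.of_isCoprime_of_dvd_left (Int.isCoprime_iff_gcd_eq_one.2 rfl) hj
  have hjy : j ∣ y ^ 2 := hj27.dvd_of_dvd_mul_left
    ((Int.dvd_add_right (hj.mul_right (x ^ 2))).1 (Dvd.intro p hs.1.symm))
  have hjxy : j ∣ 2 * (x * y) := mul_left_comm x 2 y ▸ (dvd_two_mul_of_dvd_sq hj hjy).mul_left x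
  obtain ⟨a, b, hab, hb⟩ := exists_sq_add_mul_sq_eq_sq hj0 hs.1 hjxy
  exact ⟨a, b, hab, fun h ↦ hp.not_dvd_mul hp2 (hp.not_dvd_mul hpx hpy) (hb ▸ h.mul_left j)⟩

lemma exists_prime_dvd_not_dvd_of_coprime {m k : ℕ} (hm : m ≠ 1) (h : m.Coprime k) :
    ∃ q : ℕ, q.Prime ∧ q ∣ m ∧ ¬ q ∣ k := by
  obtain ⟨q, hq, hqm⟩ := Nat.exists_prime_and_dvd hm
  exact ⟨q, hq, hqm, fun hqk ↦ hq.one_lt.ne' (Nat.eq_one_of_dvd_coprimes h hqm hqk)⟩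

lemma coprime_six_of_mod_eq_eleven {n : ℕ} (h : n % 24 = 11) : n.Coprime 6 := by
  have hmod : n % 6 = 5 := by lia
  rw [Nat.coprime_comm, Nat.Coprime, Nat.gcd_rec, hmod]
  rfl

theorem stmt_14_general (p : ℕ) (hp : p.Prime) (hodd : Odd p)
    (hsol : ∃ j ∈ ({1, 4, 8} : Set ℤ), ∃ x y : ℤ,
      8 * x ^ 2 + 27 * y ^ 2 = j * p ∧ Int.gcd x y = 1)
    (m : ℕ) (hpm : ¬ p ∣ m) (hm : ∃ q : ℕ, q.Prime ∧ q ∣ m ∧ ¬ q ∣ 6) :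
    8 ∣ {q : ℤ × ℤ | 8 * q.1 ^ 2 + 27 * q.2 ^ 2 = (p : ℤ) * m ∧
      Int.gcd q.1 q.2 = 1}.ncard := by
  obtain ⟨j, hj, x, y, hxy⟩ := hsol
  obtain ⟨q, hq, hqm, hq6⟩ := hm
  have hj8 : j ∣ 8 := by rcases hj with rfl | rfl | rfl <;> norm_num
  have hp3 : p ≠ 3 := by exact_mod_cast ne_three_of_eight_mul_sq_add_eq hj8 hxy.1
  have hp6 : ¬ p ∣ 2 * 3 := hp.not_dvd_mul
    (fun h ↦ hodd.ne_two_of_dvd_nat dvd_rfl ((Nat.prime_dvd_prime_iff_eq hp Nat.prime_two).1 h))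
    (fun h ↦ hp3 ((Nat.prime_dvd_prime_iff_eq hp Nat.prime_three).1 h))
  have hpZ : Prime (p : ℤ) := Nat.prime_iff_prime_int.1 hp
  have hqZ : Prime (q : ℤ) := Nat.prime_iff_prime_int.1 hq
  have hp6Z : ¬ (p : ℤ) ∣ 6 := by exact_mod_cast hp6
  obtain ⟨hp2, hp8, hp27⟩ := not_dvd_of_not_dvd_six hpZ hp6Z
  obtain ⟨hq2, hq8, hq27⟩ := not_dvd_of_not_dvd_six hqZ (by exact_mod_cast hq6)
  obtain ⟨a, b, hab, hpb⟩ := exists_sq_add_216_mul_sq_eq_sq hpZ hp6Z hj8 hxy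
  exact map_dvd ENat.toNatHom (eight_dvd_encard_primitiveReps hpZ hp2 hp8 hp27 hpb
    (by exact_mod_cast hpm) hab hqZ hq2 hq8 hq27 (by exact_mod_cast hqm))

theorem stmt_14 (p : ℕ) (hp : p.Prime) (hodd : Odd p)
    (hsol : ∃ j ∈ ({1, 4, 8} : Set ℤ), ∃ x y : ℤ,
      8 * x ^ 2 + 27 * y ^ 2 = j * p ∧ Int.gcd x y = 1)
    (m : ℕ) (hm : 1 < m) (hpm : ¬ p ∣ m) (hmod : (p * m) % 24 = 11) :
    8 ∣ {q : ℤ × ℤ | 8 * q.1 ^ 2 + 27 * q.2 ^ 2 = (p : ℤ) * m ∧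
      Int.gcd q.1 q.2 = 1}.ncard :=
  stmt_14_general p hp hodd hsol m hpm (exists_prime_dvd_not_dvd_of_coprime hm.ne'
    (coprime_six_of_mod_eq_eleven hmod).coprime_mul_left)
end

section
/- For every odd prime p, the following are equivalent: (i) there exists j ∈ {1, 4, 8} such that the Diophantine equation 8x^2 + 27y^2 = jp has a primitive solution; (ii) there exists j ∈ {1, 4, 8} such that the Diophantine equation x^2 + 216y^2 = jp has a primitive solution. In other words, the set 𝒬 of odd primes satisfying (i) equals the set 𝒫 of primes satisfying (ii). -/
/-!
For odd `b` and `n`, removing the forced powers of two from a primitive solution of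
`8 * a * x ^ 2 + b * y ^ 2 = j * n` with `j ∈ {1, 4, 8}` shows that one exists iff `n` is
primitively represented by `2 * a * x ^ 2 + b * y ^ 2` (with `x` even for `j = 1`, odd for `j = 4`)
or by `a * x ^ 2 + 2 * b * y ^ 2` (for `j = 8`). Exchanging `a` and `b` permutes these two
conditions, while it turns `8 * a * x ^ 2 + b * y ^ 2` into `a * x ^ 2 + 8 * b * y ^ 2`.
-/

theorem odd_of_two_mul_mul_sq_add_mul_sq_eq {a b n x y : ℤ} (hn : Odd n)
    (h : 2 * a * x ^ 2 + b * y ^ 2 = n) : Odd y := by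
  have hby : Odd (b * y ^ 2) := by
    rw [← h, mul_assoc, Int.odd_add'] at hn
    exact hn.mpr (even_two_mul _)
  exact (Int.odd_pow' two_ne_zero).mp (Int.Odd.of_mul_right hby)

theorem two_dvd_of_two_mul_mul_sq_add_mul_sq_eq {a b m x y : ℤ} (hb : Odd b)
    (h : 2 * a * x ^ 2 + b * y ^ 2 = 2 * m) : 2 ∣ y := by
  have hby : 2 ∣ b * y ^ 2 := ⟨m - a * x ^ 2, by linear_combination h⟩
  exact Int.prime_two.dvd_of_dvd_pow ((Int.isCoprime_two_left.mpr hb).dvd_of_dvd_mul_left hby)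

theorem isCoprime_two_mul_left {x y : ℤ} (hy : Odd y) (hxy : IsCoprime x y) :
    IsCoprime (2 * x) y :=
  (Int.isCoprime_two_left.mpr hy).mul_left hxy

theorem isCoprime_two_mul_right {x y : ℤ} (hx : Odd x) (hxy : IsCoprime x y) :
    IsCoprime x (2 * y) :=
  (Int.isCoprime_two_right.mpr hx).mul_right hxy

/-- The integer `n` is primitively represented by the binary quadratic form
`a * x ^ 2 + b * y ^ 2`, that is, the equation `a * x ^ 2 + b * y ^ 2 = n` has a primitive
solution. -/
def PrimitivelyRepresents (a b n : ℤ) : Prop :=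
  ∃ x y : ℤ, a * x ^ 2 + b * y ^ 2 = n ∧ IsCoprime x y

namespace PrimitivelyRepresents

variable {a b n : ℤ}

theorem symm (h : PrimitivelyRepresents a b n) : PrimitivelyRepresents b a n :=
  let ⟨x, y, hn, hxy⟩ := h
  ⟨y, x, by rw [add_comm, hn], hxy.symm⟩

theorem comm : PrimitivelyRepresents a b n ↔ PrimitivelyRepresents b a n :=
  ⟨symm, symm⟩

theorem iff_four_mul_left (hb : Odd b) (hn : Odd n) :
    PrimitivelyRepresents a b n ↔
      PrimitivelyRepresents (4 * a) b n ∨ PrimitivelyRepresents (4 * a) b (4 * n) := by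
  constructor
  · rintro ⟨x, y, h, hxy⟩
    rcases x.even_or_odd' with ⟨u, rfl | rfl⟩
    · exact .inl ⟨u, y, by linear_combination h, hxy.of_mul_left_right⟩
    · exact .inr ⟨2 * u + 1, 2 * y, by linear_combination 4 * h,
        isCoprime_two_mul_right (odd_two_mul_add_one u) hxy⟩
  · rintro (⟨x, y, h, hxy⟩ | ⟨x, y, h, hxy⟩)
    · have hy : Odd y :=
        odd_of_two_mul_mul_sq_add_mul_sq_eq (a := 2 * a) (b := b) (x := x) hn
          (by linear_combination h)
      exact ⟨2 * x, y, by linear_combination h, isCoprime_two_mul_left hy hxy⟩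
    · obtain ⟨z, rfl⟩ : 2 ∣ y :=
        two_dvd_of_two_mul_mul_sq_add_mul_sq_eq (a := 2 * a) (m := 2 * n) (x := x) hb
          (by linear_combination h)
      exact ⟨x, z, by linarith, hxy.of_mul_right_right⟩

theorem eight_mul_iff (hb : Odd b) (hn : Odd n) :
    PrimitivelyRepresents (8 * a) b (8 * n) ↔ PrimitivelyRepresents a (2 * b) n := by
  constructor
  · rintro ⟨x, y, h, hxy⟩
    obtain ⟨z, rfl⟩ : 2 ∣ y :=
      two_dvd_of_two_mul_mul_sq_add_mul_sq_eq (a := 4 * a) (m := 4 * n) (x := x) hb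
        (by linear_combination h)
    have hz : 2 * a * x ^ 2 + b * z ^ 2 = 2 * n := by linarith
    obtain ⟨w, rfl⟩ : 2 ∣ z := two_dvd_of_two_mul_mul_sq_add_mul_sq_eq hb hz
    exact ⟨x, w, by linarith, hxy.of_mul_right_right.of_mul_right_right⟩
  · rintro ⟨x, w, h, hxw⟩
    have hx : Odd x := odd_of_two_mul_mul_sq_add_mul_sq_eq hn ((add_comm _ _).trans h)
    exact ⟨x, 2 * (2 * w), by linear_combination 8 * h,
      isCoprime_two_mul_right hx (isCoprime_two_mul_right hx hxw)⟩

theorem exists_eight_mul_left_iff (hb : Odd b) (hn : Odd n) :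
    (∃ j ∈ ({1, 4, 8} : Set ℤ), PrimitivelyRepresents (8 * a) b (j * n)) ↔
      PrimitivelyRepresents (2 * a) b n ∨ PrimitivelyRepresents a (2 * b) n := by
  have h8 : 4 * (2 * a) = 8 * a := by ring
  rw [iff_four_mul_left hb hn, h8, ← eight_mul_iff hb hn]
  simp only [Set.mem_insert_iff, Set.mem_singleton_iff, exists_eq_or_imp, exists_eq_left, one_mul,
    or_assoc]

end PrimitivelyRepresents

open PrimitivelyRepresents in
theorem stmt_16_general {a b n : ℤ} (ha : Odd a) (hb : Odd b) (hn : Odd n) :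
    (∃ j ∈ ({1, 4, 8} : Set ℤ), PrimitivelyRepresents (8 * a) b (j * n)) ↔
      ∃ j ∈ ({1, 4, 8} : Set ℤ), PrimitivelyRepresents a (8 * b) (j * n) := by
  simp only [comm (a := a) (b := 8 * b), exists_eight_mul_left_iff hb hn,
    exists_eight_mul_left_iff ha hn]
  rw [comm (a := 2 * b), comm (a := b), or_comm]

theorem stmt_16 (p : ℕ) (hp : p.Prime) (hodd : Odd p) :
    (∃ j ∈ ({1, 4, 8} : Set ℤ), ∃ x y : ℤ,
      8 * x ^ 2 + 27 * y ^ 2 = j * p ∧ Int.gcd x y = 1) ↔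
    (∃ j ∈ ({1, 4, 8} : Set ℤ), ∃ x y : ℤ,
      x ^ 2 + 216 * y ^ 2 = j * p ∧ Int.gcd x y = 1) := by
  simpa [PrimitivelyRepresents, Int.isCoprime_iff_gcd_eq_one] using
    stmt_16_general odd_one (by decide : Odd (27 : ℤ)) hodd.natCast
end
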